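/- Let Q ≥ 2 be a fixed integer and ρ ∈ (0, 1/2] a fixed real. For each positive integer κ set N = κQ and n = ⌊ρN⌋. For the congestion dynamics {σ(t)} on 𝒮_n, for each ε ∈ (0,1) there exist constants C_ε and N_ε such that for all n ≥ N_ε one has |T^mix(ε) − (1/2)·n·log n| ≤ C_ε·n. In particular the chain exhibits cutoff at time (1/2)n log n with window of order n. -/

import Mathlib

/-!
The chain is lifted to placements of `n` particles and `q = N - n` holes into the `N = κ Q` slots,
each resource consisting of `κ` slots. In the lift a uniform particle is exchanged with a uniform
element of the set made of itself and the `q` holes. Recording only the resource of each particle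
gives the congestion dynamics (`configP_conf`, `sum_evolve`), and the Gibbs measure is the image of
the uniform law on placements (`sum_gibbs`). Since `ρ ≤ 1/2`, one has `n ≤ q`.

Upper bound. A function of the particle sites is decomposed into pure functions, one for each set
`A` of particles, where pure means that averaging over the site of any one element of `A` gives `0`
(`Dep.decomp`). Different levels `k = |A|` are orthogonal (`Pure.orthogonal`). By purity, the
dynamics acts on a level `k` family as the scalar `λ_k = 1 - (k / n) (1 - 1 / (1 + q))` minus a
multiple of a positive operator `L* L` (`pop_sum`, `ip_lowerSq`); as `n ≤ q` that multiple has norm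
at most `λ_k`, so the family is contracted by `λ_k` (`famSq_famStep_le`). To go from the function to
the family, each particle is paired with a hole: projecting onto functions that are odd under the
exchanges of partners separates the sets `A` and costs a factor at most `2 ^ k` (`famSq_le`). To go
back to pointwise bounds, prescribing the sites of `k` particles has probability at least
`(e Q) ^ (-k)` (`card_le_agree`), and there are at most `n ^ k` sets of size `k`. So the level `k`
part of an indicator at time `t` is at most `r ^ k`, with
`r = √(2 e Q n) exp (-(t / n) (1 - 1 / (1 + q)))`, and a geometric series gives distance at most
`2 r` (`pop_iter_close`), which is small for `t = (1/2) n log n + C n`.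

Lower bound. Weight the particles by `1`, `-1`, `0` according to whether they start at resource `0`,
at resource `1`, or elsewhere (with equally many weights `1` and `-1`); the weighted number of
particles at resource `0` is an eigenfunction with eigenvalue `λ_1` and its variance is `O(n)` at
all times and at equilibrium (`pop_stat`, `pop_stat_sq`). From the cyclic configuration its
expectation at time `t` is of order `n λ_1 ^ t`, which exceeds `√n` by a large factor when
`t = (1/2) n log n - C n`, so Chebyshev's inequality separates the two laws (`pop_iter_far`).
-/

open scoped BigOperators
open Filter MeasureTheory

noncomputable section

namespace CongestionPaper

attribute [local instance 10] Classical.propDecidable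

/-- Evolution of a distribution under a transition kernel `p` on a finite state space:
`evolve p mu t` is the law at time `t` of the Markov chain with transition matrix `p`
and initial distribution `mu`. -/
def evolve {X : Type*} [Fintype X] (p : X -> X -> Real) (mu : X -> Real) : Nat -> X -> Real
  | 0 => mu
  | (t+1) => fun y => ∑ x, evolve p mu t x * p x y

/-- Point mass at `x0`. -/
def delta {X : Type*} (x0 : X) : X -> Real := fun x => if x = x0 then 1 else 0

/-- Total variation distance between two distributions on a finite type,
as the supremum over events `A` of the difference of probabilities of `A`. -/
def tvDist {X : Type*} [Fintype X] (mu nu : X -> Real) : Real :=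
  ⨆ A : Finset X, |∑ x ∈ A, (mu x - nu x)|

/-- Total variation distance between the pushforwards of `mu` and `nu` under `m`. -/
def tvDistOn {X : Type*} [Fintype X] {Y : Type*} (m : X -> Y) (mu nu : X -> Real) : Real :=
  ⨆ B : Finset Y, |∑ x : X, (if m x ∈ B then mu x - nu x else 0)|

/-- Worst-case (over the initial state) total variation distance to `pi` at time `t`. -/
def DTV {X : Type*} [Fintype X] (p : X -> X -> Real) (pi : X -> Real) (t : Nat) : Real :=
  ⨆ x0 : X, tvDist (evolve p (delta x0) t) pi

/-- Mixing time `T^mix(eps)`. -/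
def Tmix {X : Type*} [Fintype X] (p : X -> X -> Real) (pi : X -> Real) (eps : Real) : Nat :=
  sInf {t : Nat | DTV p pi t ≤ eps}

/-- Probability of a given trajectory `w` of length `T` for the chain started at `x0`. -/
def pathProb {X : Type*} [Fintype X] (p : X -> X -> Real) (x0 : X) (T : Nat)
    (w : Fin (T+1) -> X) : Real :=
  (if w 0 = x0 then 1 else 0) * ∏ t : Fin T, p (w t.castSucc) (w t.succ)

/-- Probability that some state visited up to time `T` satisfies `Bad`. -/
def hitProb {X : Type*} [Fintype X] (p : X -> X -> Real) (x0 : X) (T : Nat)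
    (Bad : X -> Prop) : Real :=
  ∑ w : Fin (T+1) -> X, (if ∃ t, Bad (w t) then pathProb p x0 T w else 0)

/-! ### The load profile chain -/

/-- Load profiles: `xi : S -> {0,...,kappa}` with `∑ xi v = n`, where `S = Fin Q`. -/
abbrev LoadState (Q kap n : Nat) := {xi : Fin Q -> Fin (kap+1) // (∑ v, ((xi v : Nat))) = n}

/-- Transition matrix of the load profile chain on `Xi_{n,S,kappa}`. -/
def loadP (Q kap n : Nat) (xi xi' : LoadState Q kap n) : Real :=
  if xi' = xi then
    (∑ v, ((xi.1 v : Nat) : Real) * (((1 + kap - (xi.1 v : Nat) : Nat)) : Real))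
      / ((n : Real) * ((1 + kap * Q - n : Nat) : Real))
  else
    (∑ vm, ∑ vp,
      if vm ≠ vp ∧ (xi'.1 vm : Nat) + 1 = (xi.1 vm : Nat) ∧ (xi'.1 vp : Nat) = (xi.1 vp : Nat) + 1 ∧
          (∀ v, v ≠ vm -> v ≠ vp -> xi'.1 v = xi.1 v)
        then ((xi.1 vm : Nat) : Real) * (((kap - (xi.1 vp : Nat) : Nat)) : Real) else 0)
      / ((n : Real) * ((1 + kap * Q - n : Nat) : Real))

/-- Stationary weight `∏_v 1/(xi_v! (kappa - xi_v)!)`. -/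
def loadWeight (Q kap n : Nat) (xi : LoadState Q kap n) : Real :=
  ∏ v, (1 : Real) /
    ((Nat.factorial (xi.1 v : Nat) : Real) * (Nat.factorial (kap - (xi.1 v : Nat)) : Real))

/-- The stationary distribution `pi_n` of the load profile chain. -/
def loadPi (Q kap n : Nat) (xi : LoadState Q kap n) : Real :=
  loadWeight Q kap n xi / (∑ eta : LoadState Q kap n, loadWeight Q kap n eta)

/-- `xi ∈ Xi(delta)`: the normalized load profile is within Euclidean distance `delta`
of the constant vector `(rho/Q)_v`. -/
def loadNear (Q kap n : Nat) (rho : Real) (xi : LoadState Q kap n) (del : Real) : Prop :=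
  Real.sqrt (∑ v, (((xi.1 v : Nat) : Real) / ((kap * Q : Nat) : Real) - rho / (Q : Real))^2) ≤ del

/-- `D(xi, xi') = (1/2) ∑_v |xi_v - xi'_v|`. -/
def loadD (Q kap n : Nat) (xi xi' : LoadState Q kap n) : Real :=
  (1/2) * ∑ v, |((xi.1 v : Nat) : Real) - ((xi'.1 v : Nat) : Real)|

/-! ### The congestion dynamics (Glauber dynamics) -/

/-- `xi_v(sigma)`: the number of players adopting resource `v`. -/
def xiCount {Q n : Nat} (sg : Fin n -> Fin Q) (v : Fin Q) : Nat :=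
  (Finset.univ.filter fun i => sg i = v).card

/-- Configurations: `sigma : [n] -> S` with `xi_v(sigma) ≤ kappa` for every `v`. -/
abbrev ConfigState (Q kap n : Nat) := {sg : Fin n -> Fin Q // ∀ v, xiCount sg v ≤ kap}

/-- Transition matrix of the congestion dynamics. -/
def configP (Q kap n : Nat) (sg sg' : ConfigState Q kap n) : Real :=
  if sg' = sg then
    (∑ i, ((1 + kap - xiCount sg.1 (sg.1 i) : Nat) : Real))
      / ((n : Real) * ((1 + kap * Q - n : Nat) : Real))
  else
    (∑ i, if sg'.1 i ≠ sg.1 i ∧ (∀ j, j ≠ i -> sg'.1 j = sg.1 j)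
        then ((kap - xiCount sg.1 (sg'.1 i) : Nat) : Real) else 0)
      / ((n : Real) * ((1 + kap * Q - n : Nat) : Real))

/-- The potential `F(sigma) = ∑_v ∑_{s=0}^{xi_v(sigma)} (log(kappa+1) - log(kappa+1-s))`. -/
def potF (Q kap n : Nat) (sg : ConfigState Q kap n) : Real :=
  ∑ v, ∑ s ∈ Finset.range (xiCount sg.1 v + 1),
    (Real.log ((kap : Real) + 1) - Real.log ((kap : Real) + 1 - (s : Real)))

/-- The Gibbs measure `mu_n(sigma) = e^{-F(sigma)}/Z_n`. -/
def gibbs (Q kap n : Nat) (sg : ConfigState Q kap n) : Real :=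
  Real.exp (-(potF Q kap n sg)) / (∑ ta : ConfigState Q kap n, Real.exp (-(potF Q kap n ta)))

/-- `sigma ∈ S(delta)`. -/
def configNear (Q kap n : Nat) (rho : Real) (sg : ConfigState Q kap n) (del : Real) : Prop :=
  Real.sqrt (∑ v, ((xiCount sg.1 v : Real) / ((kap * Q : Nat) : Real) - rho / (Q : Real))^2) ≤ del

/-- The load matrix `xi^{sigma0}_{u,v}(sigma)`. -/
def ximat {Q n : Nat} (sg0 sg : Fin n -> Fin Q) (u v : Fin Q) : Nat :=
  (Finset.univ.filter fun i => sg0 i = u ∧ sg i = v).card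

/-- `sigma ∈ S(sigma0, delta)`: for each `u`, the normalized `u`-th row of the
load matrix is within Euclidean distance `delta` of the constant vector `(1/Q)_v`. -/
def configNearMat (Q kap n : Nat) (sg0 sg : ConfigState Q kap n) (del : Real) : Prop :=
  ∀ u, Real.sqrt
      (∑ v, ((ximat sg0.1 sg.1 u v : Real) / (xiCount sg0.1 u : Real) - 1 / (Q : Real))^2) ≤ del

/-- `D^{sigma0}(sigma, sigma') = ∑_u (1/2) ∑_v |xi^{sigma0}_{u,v}(sigma) - xi^{sigma0}_{u,v}(sigma')|`. -/
def matD (Q kap n : Nat) (sg0 sg sg' : ConfigState Q kap n) : Real :=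
  ∑ u, (1/2) * ∑ v, |(ximat sg0.1 sg.1 u v : Real) - (ximat sg0.1 sg'.1 u v : Real)|

/-- The constant `cStar = (sqrt Q/(1-rho) + rho/(2Q))^{1/2}`. -/
def cStar (Q : Nat) (rho : Real) : Real :=
  Real.sqrt (Real.sqrt (Q : Real) / (1 - rho) + rho / (2 * (Q : Real)))

/-! ### The base-exchange chain on `B^(Q)(n)` -/

/-- `B^(Q)(n) = {x ∈ Z_{≥0}^Q : ∑ x_i = n}`. -/
abbrev BState (Q n : Nat) := {x : Fin Q -> Fin (n+1) // (∑ i, ((x i : Nat))) = n}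

/-- Transition matrix of the base-exchange chain on `B^(Q)(n)`. -/
def baseP (Q n : Nat) (x y : BState Q n) : Real :=
  if y = x then
    ∑ i, (if 0 < (x.1 i : Nat) then (1 : Real) / ((Q : Real) * (Q : Real)) else (1 : Real) / (Q : Real))
  else
    ∑ i, ∑ j,
      if i ≠ j ∧ (y.1 i : Nat) + 1 = (x.1 i : Nat) ∧ (y.1 j : Nat) = (x.1 j : Nat) + 1 ∧
          (∀ v, v ≠ i -> v ≠ j -> y.1 v = x.1 v)
        then (1 : Real) / ((Q : Real) * (Q : Real)) else 0

/-- The lazy version of the base-exchange chain. -/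
def lazyBaseP (Q n : Nat) (x y : BState Q n) : Real :=
  (1/2) * (if y = x then 1 else 0) + (1/2) * baseP Q n x y

/-- The uniform distribution on `B^(Q)(n)`. -/
def unifB (Q n : Nat) (x : BState Q n) : Real := 1 / (Fintype.card (BState Q n) : Real)

section Perm

set_option linter.unusedSectionVars false
set_option linter.unusedVariables false

variable {I X S : Type} [Fintype I] [DecidableEq I] [Fintype X] [DecidableEq X] [DecidableEq S]

/-! ### Functions on placements -/

/-- Right translation of a function of a placement `w : I ≃ X`: the permutation `u` of the
positions acts by `(act u f) w = f (w ∘ u)`. -/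
def act (u : Equiv.Perm I) (f : (I ≃ X) → ℝ) : (I ≃ X) → ℝ := fun w => f (u.trans w)

/-- The (unnormalised) `L²` inner product on functions of a placement. -/
def ip (f g : (I ≃ X) → ℝ) : ℝ := ∑ w, f w * g w

/-- `Dep site A f`: the value `f w` depends only on the sites of the slots occupied by the
positions in `A`. -/
def Dep (site : X → S) (A : Finset I) (f : (I ≃ X) → ℝ) : Prop :=
  ∀ w w' : I ≃ X, (∀ a ∈ A, site (w a) = site (w' a)) → f w = f w'

/-- `Pure site A g`: `g` is a function of the sites of `A` whose average over the value at any one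
position `i ∈ A`, given the values at the other positions of `A`, vanishes. -/
def Pure (site : X → S) (A : Finset I) (g : (I ≃ X) → ℝ) : Prop :=
  Dep site A g ∧ ∀ i ∈ A, ∀ w, g w + ∑ j ∈ Aᶜ, act (Equiv.swap i j) g w = 0

variable {site : X → S} {A B : Finset I} {f g h : (I ≃ X) → ℝ}

lemma act_act (u v : Equiv.Perm I) (f : (I ≃ X) → ℝ) : act u (act v f) = act (u * v) f := rfl

lemma act_one (f : (I ≃ X) → ℝ) : act 1 f = f := rfl

lemma act_add (u : Equiv.Perm I) (f g : (I ≃ X) → ℝ) : act u (f + g) = act u f + act u g := rfl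

lemma act_smul (u : Equiv.Perm I) (c : ℝ) (f : (I ≃ X) → ℝ) : act u (c • f) = c • act u f := rfl

lemma act_sum {ι : Type*} (u : Equiv.Perm I) (s : Finset ι) (f : ι → (I ≃ X) → ℝ) :
    act u (∑ i ∈ s, f i) = ∑ i ∈ s, act u (f i) := by
  funext w; simp [act]

lemma act_swap_self (i j : I) (f : (I ≃ X) → ℝ) :
    act (Equiv.swap i j) (act (Equiv.swap i j) f) = f := by
  rw [act_act, Equiv.swap_mul_self, act_one]

lemma ip_comm (f g : (I ≃ X) → ℝ) : ip f g = ip g f := by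
  simp [ip, mul_comm]

lemma ip_add_left (f g h : (I ≃ X) → ℝ) : ip (f + g) h = ip f h + ip g h := by
  simp [ip, add_mul, Finset.sum_add_distrib]

lemma ip_add_right (f g h : (I ≃ X) → ℝ) : ip f (g + h) = ip f g + ip f h := by
  rw [ip_comm, ip_add_left, ip_comm g, ip_comm h]

lemma ip_smul_left (c : ℝ) (f h : (I ≃ X) → ℝ) : ip (c • f) h = c * ip f h := by
  simp [ip, Finset.mul_sum, mul_assoc]

lemma ip_smul_right (c : ℝ) (f h : (I ≃ X) → ℝ) : ip f (c • h) = c * ip f h := by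
  rw [ip_comm, ip_smul_left, ip_comm]

lemma ip_sum_left {ι : Type*} (s : Finset ι) (f : ι → (I ≃ X) → ℝ) (h : (I ≃ X) → ℝ) :
    ip (∑ i ∈ s, f i) h = ∑ i ∈ s, ip (f i) h := by
  simp only [ip, Finset.sum_apply, Finset.sum_mul]
  exact Finset.sum_comm

lemma ip_sum_right {ι : Type*} (s : Finset ι) (f : ι → (I ≃ X) → ℝ) (h : (I ≃ X) → ℝ) :
    ip h (∑ i ∈ s, f i) = ∑ i ∈ s, ip h (f i) := by
  rw [ip_comm, ip_sum_left]; simp [ip_comm]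

lemma ip_self_nonneg (f : (I ≃ X) → ℝ) : 0 ≤ ip f f :=
  Finset.sum_nonneg fun w _ => mul_self_nonneg _

lemma ip_self_eq_zero (hf : ip f f = 0) : f = 0 := by
  funext w
  have := (Finset.sum_eq_zero_iff_of_nonneg (fun w _ => mul_self_nonneg (f w))).1 hf w
    (Finset.mem_univ _)
  simpa using this

lemma ip_act (u : Equiv.Perm I) (f g : (I ≃ X) → ℝ) : ip (act u f) (act u g) = ip f g := by
  unfold ip act
  exact Fintype.sum_equiv (Equiv.equivCongr u.symm (Equiv.refl X))
    (fun w => f (u.trans w) * g (u.trans w)) (fun w => f w * g w) (fun w => rfl)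

lemma ip_act_swap (i j : I) (f g : (I ≃ X) → ℝ) :
    ip (act (Equiv.swap i j) f) g = ip f (act (Equiv.swap i j) g) := by
  conv_lhs => rw [← act_swap_self i j g]
  rw [ip_act]

/-- Cauchy-Schwarz for the norm of a sum of `s.card` functions. -/
lemma ip_sum_self_le {ι : Type*} (s : Finset ι) (f : ι → (I ≃ X) → ℝ) :
    ip (∑ i ∈ s, f i) (∑ i ∈ s, f i) ≤ s.card * ∑ i ∈ s, ip (f i) (f i) := by
  simp only [ip]
  rw [Finset.sum_comm, Finset.mul_sum]
  refine Finset.sum_le_sum fun w _ => ?_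
  have := sq_sum_le_card_mul_sum_sq (s := s) (f := fun i => f i w)
  simp only [Finset.sum_apply]
  calc _ = (∑ i ∈ s, f i w) ^ 2 := by ring
    _ ≤ _ := this
    _ = _ := by simp [sq]

/-! ### Functions of the sites of a set of positions -/

lemma Dep.mono (hf : Dep site A f) (hAB : A ⊆ B) : Dep site B f :=
  fun w w' h => hf w w' fun a ha => h a (hAB ha)

lemma Dep.zero : Dep site A (0 : (I ≃ X) → ℝ) := fun _ _ _ => rfl

lemma Dep.add (hf : Dep site A f) (hg : Dep site A g) : Dep site A (f + g) :=
  fun w w' h => by simp [hf w w' h, hg w w' h]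

lemma Dep.smul (c : ℝ) (hf : Dep site A f) : Dep site A (c • f) :=
  fun w w' h => by simp [hf w w' h]

lemma Dep.sum {ι : Type*} {s : Finset ι} {f : ι → (I ≃ X) → ℝ} (hf : ∀ i ∈ s, Dep site A (f i)) :
    Dep site A (∑ i ∈ s, f i) := fun w w' h => by
  simp only [Finset.sum_apply]
  exact Finset.sum_congr rfl fun i hi => hf i hi w w' h

lemma Dep.transl (u : Equiv.Perm I) (hf : Dep site A f) : Dep site (A.image u) (act u f) :=
  fun w w' h => hf _ _ fun a ha => h (u a) (Finset.mem_image_of_mem _ ha)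

lemma Dep.act_congr (hf : Dep site A f) {u v : Equiv.Perm I} (h : ∀ a ∈ A, u a = v a) :
    act u f = act v f := by
  funext w
  exact hf _ _ fun a ha => by simp [h a ha]

lemma Dep.act_fix (hf : Dep site A f) {u : Equiv.Perm I} (h : ∀ a ∈ A, u a = a) :
    act u f = f := by
  rw [hf.act_congr (v := 1) (by simpa using h), act_one]

lemma Dep.act_swap (hf : Dep site A f) {i j : I} (hi : i ∉ A) (hj : j ∉ A) :
    act (Equiv.swap i j) f = f :=
  hf.act_fix fun a ha => Equiv.swap_apply_of_ne_of_ne (by rintro rfl; exact hi ha)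
    (by rintro rfl; exact hj ha)

/-- The sum of `z` over all values at position `i ∈ A` compatible with the values on `A \ {i}` is
a function of the sites of `A \ {i}` only: the multiset of sites left over by `A \ {i}` is
determined by the sites of `A \ {i}`. -/
lemma Dep.avg {z : (I ≃ X) → ℝ} (hz : Dep site A z) {i : I} (hi : i ∈ A) :
    Dep site (A.erase i) (z + ∑ j ∈ Aᶜ, act (Equiv.swap i j) z) := by
  have key : z + ∑ j ∈ Aᶜ, act (Equiv.swap i j) z
      = ∑ j ∈ (A.erase i)ᶜ, act (Equiv.swap i j) z := by
    rw [Finset.compl_erase, Finset.sum_insert (by simpa using hi)]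
    congr 1
    rw [Equiv.swap_self]; rfl
  rw [key]
  set C := A.erase i with hC
  intro w w' hww
  have cardw : ∀ (w : I ≃ X) (s : S),
      Fintype.card {x : {j // j ∈ Cᶜ} // site (w x) = s} + (C.filter fun j => site (w j) = s).card
        = (Finset.univ.filter fun x : X => site x = s).card := by
    intro w s
    have e1 : Fintype.card {x : {j // j ∈ Cᶜ} // site (w x) = s}
        = (Cᶜ.filter fun j => site (w j) = s).card := by
      rw [Fintype.card_subtype]
      rw [← Finset.card_map (Function.Embedding.subtype _)]
      congr 1
      ext j; simp [and_comm]
    have e2 : (Finset.univ.filter fun x : X => site x = s).card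
        = (Finset.univ.filter fun j : I => site (w j) = s).card := by
      rw [← Finset.card_map w.toEmbedding]
      congr 1
      ext x
      simp only [Finset.mem_filter, Finset.mem_univ, true_and, Finset.mem_map,
        Equiv.coe_toEmbedding]
      constructor
      · intro hx; exact ⟨w.symm x, by simpa using hx, by simp⟩
      · rintro ⟨j, hj, rfl⟩; exact hj
    rw [e1, e2, ← Finset.card_union_of_disjoint, ← Finset.filter_union]
    · congr 1; ext j; simp [em']
    · exact Finset.disjoint_filter_filter (disjoint_compl_left)
  have hfib : ∀ s : S, Nonempty ({x : {j // j ∈ Cᶜ} // site (w x) = s} ≃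
      {x : {j // j ∈ Cᶜ} // site (w' x) = s}) := by
    intro s
    refine ⟨Fintype.equivOfCardEq ?_⟩
    have h1 := cardw w s
    have h2 := cardw w' s
    have h3 : (C.filter fun j => site (w j) = s) = C.filter fun j => site (w' j) = s :=
      Finset.filter_congr fun j hj => by rw [hww j hj]
    rw [h3] at h1
    omega
  let e := fun s => (hfib s).some
  let u := Equiv.ofFiberEquiv (f := fun x : {j // j ∈ Cᶜ} => site (w x))
    (g := fun x : {j // j ∈ Cᶜ} => site (w' x)) e
  have hu : ∀ x, site (w' (u x)) = site (w x) := fun x => Equiv.ofFiberEquiv_map e x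
  simp only [Finset.sum_apply]
  rw [← Finset.sum_coe_sort, ← Finset.sum_coe_sort Cᶜ]
  refine Fintype.sum_equiv u _ _ fun x => ?_
  refine hz _ _ fun a ha => ?_
  by_cases hai : a = i
  · subst hai
    simpa using (hu x).symm
  · have haC : a ∈ C := Finset.mem_erase.2 ⟨hai, ha⟩
    have h1 : a ≠ x := by
      intro h; exact (Finset.mem_compl.1 x.2) (h ▸ haC)
    have h2 : a ≠ u x := by
      intro h; exact (Finset.mem_compl.1 (u x).2) (h ▸ haC)
    simpa [Equiv.swap_apply_of_ne_of_ne hai h1, Equiv.swap_apply_of_ne_of_ne hai h2]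
      using hww a haC

/-! ### Pure functions -/

lemma Pure.zero : Pure site A (0 : (I ≃ X) → ℝ) :=
  ⟨Dep.zero, fun i _ w => by simp [act]⟩

lemma Pure.add (hf : Pure site A f) (hg : Pure site A g) : Pure site A (f + g) := by
  refine ⟨hf.1.add hg.1, fun i hi w => ?_⟩
  have h1 := hf.2 i hi w
  have h2 := hg.2 i hi w
  simp only [act_add, Pi.add_apply, Finset.sum_add_distrib]
  linarith

lemma Pure.smul (c : ℝ) (hf : Pure site A f) : Pure site A (c • f) := by
  refine ⟨hf.1.smul c, fun i hi w => ?_⟩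
  have h1 := hf.2 i hi w
  simp only [act_smul, Pi.smul_apply, smul_eq_mul, ← Finset.mul_sum]
  rw [← mul_add, h1, mul_zero]

lemma Pure.sum {ι : Type*} {s : Finset ι} {f : ι → (I ≃ X) → ℝ}
    (hf : ∀ i ∈ s, Pure site A (f i)) : Pure site A (∑ i ∈ s, f i) := by
  classical
  induction s using Finset.induction_on with
  | empty => simpa using Pure.zero
  | insert a s ha ih =>
    rw [Finset.sum_insert ha]
    exact (hf a (by simp)).add (ih fun i hi => hf i (by simp [hi]))

lemma Pure.transl (u : Equiv.Perm I) (hg : Pure site A g) : Pure site (A.image u) (act u g) := by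
  refine ⟨hg.1.transl u, fun i hi w => ?_⟩
  obtain ⟨a, ha, rfl⟩ := Finset.mem_image.1 hi
  have h1 := hg.2 a ha (u.trans w)
  have h2 : ∑ j ∈ (A.image u)ᶜ, act (Equiv.swap (u a) j)
      (act u g) w = ∑ j ∈ Aᶜ, act (Equiv.swap a j) g (u.trans w) := by
    symm
    refine Finset.sum_bij (fun j _ => u j) ?_ ?_ ?_ ?_
    · intro j hj; simpa using hj
    · intro j _ j' _ h; simpa using h
    · intro j hj; exact ⟨u.symm j, by
        simp only [Finset.mem_compl, Finset.mem_image, not_exists, not_and] at hj ⊢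
        intro h; exact hj _ h (by simp), by simp⟩
    · intro j _
      simp only [act]
      congr 1
      ext x
      simp [Equiv.swap_apply_def]
      split_ifs <;> simp_all
  rw [h2]; exact h1

/-- Averaging out a position `i ∈ A \ B` against a function of `B` replaces `f` by its
transports along `i ↔ j` with `j ∈ B \ A`. -/
lemma Pure.recursion (hg : Pure site A g) (hf : Dep site B f) {i : I} (hi : i ∈ A) (hiB : i ∉ B) :
    (1 + ((A ∪ B)ᶜ.card : ℝ)) * ip g f
      = -∑ j ∈ B \ A, ip g (act (Equiv.swap i j) f) := by
  have h0 : ip (g + ∑ j ∈ Aᶜ, act (Equiv.swap i j) g) f = 0 := by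
    have : g + ∑ j ∈ Aᶜ, act (Equiv.swap i j) g = 0 := by
      funext w; simpa using hg.2 i hi w
    rw [this]; simp [ip]
  rw [ip_add_left, ip_sum_left] at h0
  have hs : Aᶜ = (A ∪ B)ᶜ ∪ (B \ A) := by
    ext j; simp only [Finset.mem_compl, Finset.mem_union, Finset.mem_sdiff]; tauto
  have hd : Disjoint (A ∪ B)ᶜ (B \ A) := by
    rw [Finset.disjoint_left]; intro j; simp; tauto
  rw [hs, Finset.sum_union hd] at h0
  have h1 : ∑ j ∈ (A ∪ B)ᶜ, ip (act (Equiv.swap i j) g) f = ((A ∪ B)ᶜ.card : ℝ) * ip g f := by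
    rw [Finset.sum_congr rfl (g := fun _ => ip g f), Finset.sum_const, nsmul_eq_mul]
    intro j hj
    rw [ip_act_swap, hf.act_swap hiB]
    simp at hj; exact hj.2
  rw [h1, Finset.sum_congr rfl fun j _ => ip_act_swap i j g f] at h0
  linarith

/-- Pure functions of `A` are orthogonal to functions of fewer positions. -/
lemma Pure.orthogonal (hg : Pure site A g) : ∀ (r : ℕ) (B : Finset I) (f : (I ≃ X) → ℝ),
    (B \ A).card = r → Dep site B f → B.card < A.card → ip g f = 0 := by
  intro r
  induction r with
  | zero =>
    intro B f hr hf hBA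
    obtain ⟨i, hi, hiB⟩ := Finset.exists_mem_notMem_of_card_lt_card hBA
    have := hg.recursion hf hi hiB
    rw [Finset.card_eq_zero.1 hr] at this
    simp only [Finset.sum_empty, neg_zero, mul_eq_zero] at this
    rcases this with h | h
    · exact absurd h (by positivity)
    · exact h
  | succ r ih =>
    intro B f hr hf hBA
    obtain ⟨i, hi, hiB⟩ := Finset.exists_mem_notMem_of_card_lt_card hBA
    have := hg.recursion hf hi hiB
    rw [Finset.sum_eq_zero, neg_zero, mul_eq_zero] at this
    · rcases this with h | h
      · exact absurd h (by positivity)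
      · exact h
    · intro j hj
      refine ih _ _ ?_ (hf.transl _) (by rwa [Finset.card_image_of_injective _ (Equiv.injective _)])
      have : B.image (Equiv.swap i j) \ A = (B \ A).erase j := by
        rw [Finset.mem_sdiff] at hj
        ext x
        simp only [Finset.mem_sdiff, Finset.mem_image, Finset.mem_erase]
        constructor
        · rintro ⟨⟨b, hb, rfl⟩, hx⟩
          rcases eq_or_ne b j with rfl | hbj
          · simp [hi] at hx
          · have hbi : b ≠ i := by rintro rfl; exact hiB hb
            rw [Equiv.swap_apply_of_ne_of_ne hbi hbj] at hx ⊢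
            exact ⟨hbj, hb, hx⟩
        · rintro ⟨hxj, hxB, hxA⟩
          have hxi : x ≠ i := by rintro rfl; exact hiB hxB
          exact ⟨⟨x, hxB, Equiv.swap_apply_of_ne_of_ne hxi hxj⟩, hxA⟩
      rw [this, Finset.card_erase_of_mem hj, hr]; rfl

/-! ### Decomposition into pure functions -/

/-- Every function of the sites of `A` is a sum of pure functions, one for each subset of `A`. -/
lemma Dep.decomp : ∀ (r : ℕ) (A : Finset I) (f : (I ≃ X) → ℝ), A.card = r → Dep site A f →
    ∃ g : Finset I → (I ≃ X) → ℝ, (∀ B ⊆ A, Pure site B (g B)) ∧ f = ∑ B ∈ A.powerset, g B := by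
  intro r
  induction r using Nat.strong_induction_on with
  | _ r ih =>
    intro A f hr hf
    -- sums of pure functions of proper subsets of `A`
    let V : Submodule ℝ ((I ≃ X) → ℝ) :=
      { carrier := {f | ∃ g : Finset I → (I ≃ X) → ℝ, (∀ B ∈ A.ssubsets, Pure site B (g B)) ∧
          f = ∑ B ∈ A.ssubsets, g B}
        add_mem' := by
          rintro a b ⟨g, hg, rfl⟩ ⟨g', hg', rfl⟩
          exact ⟨fun B => g B + g' B, fun B hB => (hg B hB).add (hg' B hB),
            by rw [Finset.sum_add_distrib]⟩
        zero_mem' := ⟨0, fun B _ => Pure.zero, by simp⟩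
        smul_mem' := by
          rintro c a ⟨g, hg, rfl⟩
          exact ⟨fun B => c • g B, fun B hB => (hg B hB).smul c, by rw [Finset.smul_sum]⟩ }
    let L : EuclideanSpace ℝ (I ≃ X) ≃ₗ[ℝ] ((I ≃ X) → ℝ) := WithLp.linearEquiv 2 ℝ _
    obtain ⟨y, hy, z, hz, hyz⟩ := (V.comap L.toLinearMap).exists_add_mem_mem_orthogonal (L.symm f)
    have hyV : L y ∈ V := hy
    obtain ⟨g, hg, hyg⟩ := hyV
    have hfyz : f = L y + L z := by
      rw [← map_add, ← hyz]; simp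
    have hzorth : ∀ h ∈ V, ip h (L z) = 0 := by
      intro h hh
      have h1 : L.symm h ∈ V.comap L.toLinearMap := by
        change L (L.symm h) ∈ V
        simpa using hh
      have h2 := (Submodule.mem_orthogonal _ _).1 hz _ h1
      rw [PiLp.inner_apply] at h2
      rw [← h2]
      refine Finset.sum_congr rfl fun w _ => ?_
      change h w * L z w = L z w * h w
      ring
    have hyD : Dep site A (L y) := by
      rw [hyg]
      exact Dep.sum fun B hB => ((hg B hB).1).mono (Finset.mem_ssubsets.1 hB).1
    have hzD : Dep site A (L z) := by
      have : L z = f + (-1 : ℝ) • L y := by rw [hfyz]; simp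
      rw [this]; exact hf.add (hyD.smul _)
    have hzP : Pure site A (L z) := by
      refine ⟨hzD, fun i hi => ?_⟩
      set h := L z + ∑ j ∈ Aᶜ, act (Equiv.swap i j) (L z) with hh
      have hD : Dep site (A.erase i) h := hzD.avg hi
      have hV : h ∈ V := by
        obtain ⟨g', hg', hs⟩ := ih (A.erase i).card (by
          rw [← hr]; exact Finset.card_erase_lt_of_mem hi) _ h rfl hD
        refine ⟨fun B => if B ⊆ A.erase i then g' B else 0, fun B _ => ?_, ?_⟩
        · dsimp only
          split_ifs with hB
          · exact hg' B hB
          · exact Pure.zero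
        · rw [hs, ← Finset.sum_filter]
          refine Finset.sum_congr ?_ fun _ _ => rfl
          ext B
          simp only [Finset.mem_powerset, Finset.mem_filter, Finset.mem_ssubsets]
          exact ⟨fun hB => ⟨lt_of_le_of_lt hB (Finset.erase_ssubset hi), hB⟩, fun hB => hB.2⟩
      have h0 : ip h h = 0 := by
        have e1 : ip (L z) h = 0 := by rw [ip_comm]; exact hzorth h hV
        conv_lhs => rw [hh]
        rw [← hh, ip_add_left, ip_sum_left, e1, zero_add]
        refine Finset.sum_eq_zero fun j hj => ?_
        rw [ip_act_swap, hD.act_swap (by simp) (fun h' => (Finset.mem_compl.1 hj)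
          (Finset.mem_of_mem_erase h')), e1]
      intro w
      have := congrFun (ip_self_eq_zero h0) w
      simpa [hh] using this
    refine ⟨fun B => if B = A then L z else g B, fun B hB => ?_, ?_⟩
    · dsimp only
      split_ifs with h
      · rw [h]; exact hzP
      · exact hg B (Finset.mem_ssubsets.2 (lt_of_le_of_ne hB h))
    · rw [hfyz, hyg, show A.powerset = insert A A.ssubsets from
        (Finset.insert_erase (Finset.mem_powerset_self A)).symm, Finset.sum_insert (by simp)]
      rw [if_pos rfl, add_comm]
      congr 1
      refine Finset.sum_congr rfl fun B hB => ?_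
      rw [if_neg (Finset.mem_ssubsets.1 hB).ne]

end Perm

section Level

set_option linter.unusedSectionVars false
set_option linter.unusedVariables false

variable {I X S : Type} [Fintype I] [DecidableEq I] [Fintype X] [DecidableEq X] [DecidableEq S]
variable {site : X → S} {P A B : Finset I} {f : (I ≃ X) → ℝ}

/-! ### The dynamics on pure families -/

/-- The lift of the congestion dynamics to placements: `P` is the set of positions carrying
particles, the other positions carry holes; a uniform particle is exchanged with a uniform element
of the set consisting of itself and all the holes. -/
def Pop (P : Finset I) (F : (I ≃ X) → ℝ) : (I ≃ X) → ℝ :=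
  (1 / ((P.card : ℝ) * (1 + (Pᶜ.card : ℝ)))) •
    ∑ i ∈ P, (F + ∑ e ∈ Pᶜ, act (Equiv.swap i e) F)

/-- Lowering operator on families indexed by sets of particles: every `g (C ∪ {i})` is transported
to `C ∪ {e₀}`, where `e₀` is a fixed hole, and the results are added up. -/
def lower (e₀ : I) (P : Finset I) (g : Finset I → (I ≃ X) → ℝ) (C : Finset I) : (I ≃ X) → ℝ :=
  ∑ i ∈ P \ C, act (Equiv.swap e₀ i) (g (insert i C))

/-- The adjoint of `lower` applied to `lower`. -/
def lowerSq (e₀ : I) (P : Finset I) (g : Finset I → (I ≃ X) → ℝ) (A : Finset I) : (I ≃ X) → ℝ :=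
  ∑ j ∈ A, act (Equiv.swap e₀ j) (lower e₀ P g (A.erase j))

/-- The square norm of the level `k` part of a family. -/
def famSq (P : Finset I) (k : ℕ) (g : Finset I → (I ≃ X) → ℝ) : ℝ :=
  ∑ A ∈ P.powersetCard k, ip (g A) (g A)

/-- An upper bound for the eigenvalues of the dynamics on level `k`. -/
def lam (P : Finset I) (k : ℕ) : ℝ :=
  1 - (k / (P.card : ℝ)) * (1 - 1 / (1 + (Pᶜ.card : ℝ)))

/-- The action of the dynamics on pure families of level `k`. -/
def famStep (e₀ : I) (P : Finset I) (k : ℕ) (g : Finset I → (I ≃ X) → ℝ) (A : Finset I) :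
    (I ≃ X) → ℝ :=
  lam P k • g A + (-(1 / ((P.card : ℝ) * (1 + (Pᶜ.card : ℝ))))) • lowerSq e₀ P g A

/-- Double counting of the pairs `(A, j)` with `j ∈ A`, through `C = A \ {j}`. -/
lemma sum_erase_reindex {M : Type*} [AddCommMonoid M] (P : Finset I) (k : ℕ)
    (Φ : Finset I → I → M) :
    ∑ A ∈ P.powersetCard (k + 1), ∑ j ∈ A, Φ (A.erase j) j
      = ∑ C ∈ P.powersetCard k, ∑ j ∈ P \ C, Φ C j := by
  rw [Finset.sum_sigma', Finset.sum_sigma']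
  refine Finset.sum_bij' (fun x _ => ⟨x.1.erase x.2, x.2⟩) (fun x _ => ⟨insert x.2 x.1, x.2⟩)
    ?_ ?_ ?_ ?_ ?_
  · rintro ⟨A, j⟩ h
    simp only [Finset.mem_sigma, Finset.mem_powersetCard, Finset.mem_sdiff] at h ⊢
    refine ⟨⟨(Finset.erase_subset _ _).trans h.1.1, ?_⟩, h.1.1 h.2, by simp⟩
    rw [Finset.card_erase_of_mem h.2, h.1.2]; rfl
  · rintro ⟨C, j⟩ h
    simp only [Finset.mem_sigma, Finset.mem_powersetCard, Finset.mem_sdiff] at h ⊢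
    refine ⟨⟨Finset.insert_subset h.2.1 h.1.1, ?_⟩, by simp⟩
    rw [Finset.card_insert_of_notMem h.2.2, h.1.2]
  · rintro ⟨A, j⟩ h
    simp only [Finset.mem_sigma] at h
    simp [Finset.insert_erase h.2]
  · rintro ⟨C, j⟩ h
    simp only [Finset.mem_sigma, Finset.mem_sdiff] at h
    simp [Finset.erase_insert h.2.2]
  · rintro ⟨A, j⟩ h
    rfl

/-- The same reindexing, for summands remembering the larger set. -/
lemma sum_insert_reindex {M : Type*} [AddCommMonoid M] (P : Finset I) (k : ℕ)
    (Φ : Finset I → I → M) :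
    ∑ C ∈ P.powersetCard k, ∑ j ∈ P \ C, Φ (insert j C) j
      = ∑ A ∈ P.powersetCard (k + 1), ∑ j ∈ A, Φ A j := by
  rw [← sum_erase_reindex P k (fun C j => Φ (insert j C) j)]
  refine Finset.sum_congr rfl fun A _ => Finset.sum_congr rfl fun j hj => ?_
  rw [Finset.insert_erase hj]

/-- `lowerSq` is a positive operator: its quadratic form is the square norm of `lower`. -/
lemma ip_lowerSq (e₀ : I) (P : Finset I) (k : ℕ) (g : Finset I → (I ≃ X) → ℝ) :
    ∑ A ∈ P.powersetCard (k + 1), ip (g A) (lowerSq e₀ P g A)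
      = famSq P k (lower e₀ P g) := by
  have h1 : ∀ A, ip (g A) (lowerSq e₀ P g A)
      = ∑ j ∈ A, ip (act (Equiv.swap e₀ j) (g A)) (lower e₀ P g (A.erase j)) := by
    intro A
    rw [lowerSq, ip_sum_right]
    exact Finset.sum_congr rfl fun j _ => (ip_act_swap _ _ _ _).symm
  have h2 : ∀ A ∈ P.powersetCard (k + 1), ip (g A) (lowerSq e₀ P g A)
      = ∑ j ∈ A, ip (act (Equiv.swap e₀ j) (g (insert j (A.erase j)))) (lower e₀ P g (A.erase j)) := by
    intro A _
    rw [h1]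
    exact Finset.sum_congr rfl fun j hj => by rw [Finset.insert_erase hj]
  rw [Finset.sum_congr rfl h2, sum_erase_reindex P k (fun C j =>
    ip (act (Equiv.swap e₀ j) (g (insert j C))) (lower e₀ P g C)), famSq]
  refine Finset.sum_congr rfl fun C _ => ?_
  rw [← ip_sum_left]; rfl

/-- Cauchy-Schwarz bound for the adjoint of `lower`. -/
lemma famSq_lowerSq_le (e₀ : I) (P : Finset I) (k : ℕ) (g : Finset I → (I ≃ X) → ℝ) :
    famSq P (k + 1) (lowerSq e₀ P g)
      ≤ ((k : ℝ) + 1) * ((P.card : ℝ) - k) * famSq P k (lower e₀ P g) := by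
  have h1 : ∀ A ∈ P.powersetCard (k + 1), ip (lowerSq e₀ P g A) (lowerSq e₀ P g A)
      ≤ ((k : ℝ) + 1) * ∑ j ∈ A, ip (lower e₀ P g (A.erase j)) (lower e₀ P g (A.erase j)) := by
    intro A hA
    have := ip_sum_self_le A (fun j => act (Equiv.swap e₀ j) (lower e₀ P g (A.erase j)))
    rw [(Finset.mem_powersetCard.1 hA).2] at this
    simp only [ip_act] at this
    push_cast at this
    exact this
  refine (Finset.sum_le_sum h1).trans (le_of_eq ?_)
  rw [← Finset.mul_sum, sum_erase_reindex P k
    (fun C _ => ip (lower e₀ P g C) (lower e₀ P g C)), mul_assoc]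
  congr 1
  rw [famSq, Finset.mul_sum]
  refine Finset.sum_congr rfl fun C hC => ?_
  obtain ⟨hCP, hCk⟩ := Finset.mem_powersetCard.1 hC
  rw [Finset.sum_const, nsmul_eq_mul, Finset.card_sdiff_of_subset hCP, hCk, Nat.cast_sub]
  rw [← hCk]; exact Finset.card_le_card hCP

lemma famSq_nonneg (P : Finset I) (k : ℕ) (g : Finset I → (I ≃ X) → ℝ) : 0 ≤ famSq P k g :=
  Finset.sum_nonneg fun A _ => ip_self_nonneg _

/-- `lam` dominates the norm of the subtracted multiple of `lowerSq` in `famStep`. This is where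
there must be at least as many holes as particles. -/
lemma lam_lower (hP : P.card ≤ Pᶜ.card) (hP0 : 0 < P.card) {k : ℕ} (hk : k + 1 ≤ P.card) :
    ((k : ℝ) + 1) * ((P.card : ℝ) - k) / ((P.card : ℝ) * (1 + (Pᶜ.card : ℝ))) ≤ lam P (k + 1) := by
  have h1 : (0 : ℝ) < P.card := by exact_mod_cast hP0
  have h2 : (P.card : ℝ) ≤ Pᶜ.card := by exact_mod_cast hP
  have h3 : (k : ℝ) + 1 ≤ P.card := by exact_mod_cast hk
  unfold lam
  set n : ℝ := (P.card : ℝ)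
  set q : ℝ := (Pᶜ.card : ℝ)
  have e : 1 - (((k + 1 : ℕ) : ℝ) / n) * (1 - 1 / (1 + q))
      = (n * (1 + q) - (k + 1) * q) / (n * (1 + q)) := by
    have : 1 + q ≠ 0 := by positivity
    push_cast
    field_simp
    ring
  rw [e]
  have hq : 0 < 1 + q := by linarith
  refine div_le_div_of_nonneg_right ?_ (by positivity)
  nlinarith [mul_nonneg (sub_nonneg.2 h3) (sub_nonneg.2 (h3.trans (h2.trans (by linarith : q ≤ 1 + q))))]

/-- Contraction on level `k + 1`: `famStep` is `lam` minus a positive operator of norm at most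
`lam`. -/
lemma famSq_famStep_le (e₀ : I) (hP : P.card ≤ Pᶜ.card) {k : ℕ} (hk : k + 1 ≤ P.card)
    (g : Finset I → (I ≃ X) → ℝ) :
    famSq P (k + 1) (famStep e₀ P (k + 1) g) ≤ lam P (k + 1) ^ 2 * famSq P (k + 1) g := by
  have hl := lam_lower hP (by omega) hk
  set d := 1 / ((P.card : ℝ) * (1 + (Pᶜ.card : ℝ))) with hd
  have hd0 : 0 ≤ d := by positivity
  set c := lam P (k + 1) with hc
  have hexp : famSq P (k + 1) (famStep e₀ P (k + 1) g)
      = c ^ 2 * famSq P (k + 1) g - 2 * c * d * famSq P k (lower e₀ P g)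
        + d ^ 2 * famSq P (k + 1) (lowerSq e₀ P g) := by
    rw [← ip_lowerSq, famSq, famSq, famSq, Finset.mul_sum, Finset.mul_sum, Finset.mul_sum,
      ← Finset.sum_sub_distrib, ← Finset.sum_add_distrib]
    refine Finset.sum_congr rfl fun A _ => ?_
    simp only [famStep, ip_add_left, ip_add_right, ip_smul_left, ip_smul_right]
    rw [ip_comm (lowerSq e₀ P g A) (g A)]
    ring
  have hY := famSq_lowerSq_le e₀ P k g
  have hY0 := famSq_nonneg P k (lower e₀ P g)
  have hl' : ((k : ℝ) + 1) * ((P.card : ℝ) - k) * d ≤ c := by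
    rw [hd, mul_one_div]; exact hl
  have hnk : 0 ≤ ((k : ℝ) + 1) * ((P.card : ℝ) - k) := by
    have : (k : ℝ) + 1 ≤ P.card := by exact_mod_cast hk
    exact mul_nonneg (by positivity) (by linarith)
  rw [hexp]
  have h1 : d ^ 2 * famSq P (k + 1) (lowerSq e₀ P g)
      ≤ d * c * famSq P k (lower e₀ P g) := by
    calc _ ≤ d ^ 2 * (((k : ℝ) + 1) * ((P.card : ℝ) - k) * famSq P k (lower e₀ P g)) :=
          mul_le_mul_of_nonneg_left hY (by positivity)
      _ = d * (((k : ℝ) + 1) * ((P.card : ℝ) - k) * d) * famSq P k (lower e₀ P g) := by ring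
      _ ≤ _ := mul_le_mul_of_nonneg_right (mul_le_mul_of_nonneg_left hl' hd0) hY0
  have h2 : 0 ≤ d * c * famSq P k (lower e₀ P g) :=
    mul_nonneg (mul_nonneg hd0 ((mul_nonneg hnk hd0).trans hl')) hY0
  nlinarith

/-- Transport from `A` to `e₀` and back to `j`. -/
lemma act_swap_swap {C : Finset I} {i j e₀ : I} (hf : Dep site (insert i C) f)
    (he : e₀ ∉ P) (hi : i ∈ P) (hj : j ∈ P) (hC : C ⊆ P) (hjC : j ∉ C) (hiC : i ∉ C) :
    act (Equiv.swap e₀ j) (act (Equiv.swap e₀ i) f) = act (Equiv.swap i j) f := by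
  rw [act_act]
  refine hf.act_congr fun a ha => ?_
  rcases Finset.mem_insert.1 ha with rfl | haC
  · simp
  · have h1 : a ≠ e₀ := by rintro rfl; exact he (hC haC)
    have h2 : a ≠ i := by rintro rfl; exact hiC haC
    have h3 : a ≠ j := by rintro rfl; exact hjC haC
    simp [Equiv.swap_apply_of_ne_of_ne, *]

lemma famStep_pure {e₀ : I} (he : e₀ ∉ P) {k : ℕ} {g : Finset I → (I ≃ X) → ℝ}
    (hg : ∀ A ∈ P.powersetCard (k + 1), Pure site A (g A)) :
    ∀ A ∈ P.powersetCard (k + 1), Pure site A (famStep e₀ P (k + 1) g A) := by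
  intro A hA
  obtain ⟨hAP, hAk⟩ := Finset.mem_powersetCard.1 hA
  refine ((hg A hA).smul _).add (Pure.smul _ (Pure.sum fun j hj => ?_))
  rw [lower, act_sum]
  refine Pure.sum fun i hi => ?_
  rw [Finset.mem_sdiff] at hi
  have hC : A.erase j ⊆ P := (Finset.erase_subset _ _).trans hAP
  have hmem : insert i (A.erase j) ∈ P.powersetCard (k + 1) := by
    rw [Finset.mem_powersetCard]
    refine ⟨Finset.insert_subset hi.1 hC, ?_⟩
    rw [Finset.card_insert_of_notMem hi.2, Finset.card_erase_of_mem hj, hAk]; rfl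
  rw [act_swap_swap (P := P) (C := A.erase j) (hg _ hmem).1 he hi.1 (hAP hj) hC (by simp) hi.2]
  have := (hg _ hmem).transl (Equiv.swap i j)
  convert this using 1
  rw [Finset.image_insert, Equiv.swap_apply_left]
  have : (A.erase j).image (Equiv.swap i j) = A.erase j := by
    conv_rhs => rw [← Finset.image_id (s := A.erase j)]
    refine Finset.image_congr fun a ha => ?_
    have ha' : a ∈ A.erase j := ha
    refine Equiv.swap_apply_of_ne_of_ne ?_ (Finset.ne_of_mem_erase ha')
    rintro rfl; exact hi.2 ha'
  rw [this, Finset.insert_erase hj]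

/-- On a pure function of `A`, the exchanges of `i ∈ A` with the holes are traded, by purity, for
exchanges with the particles outside `A`. -/
lemma pop_pure_one (hP0 : 0 < P.card) {k : ℕ} (hA : A ∈ P.powersetCard k)
    {g : (I ≃ X) → ℝ} (hg : Pure site A g) :
    ∑ i ∈ P, (g + ∑ e ∈ Pᶜ, act (Equiv.swap i e) g)
      = (((P.card : ℝ) - k) * (1 + (Pᶜ.card : ℝ))) • g
        - ∑ i ∈ A, ∑ j ∈ P \ A, act (Equiv.swap i j) g := by
  obtain ⟨hAP, hAk⟩ := Finset.mem_powersetCard.1 hA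
  rw [← Finset.sdiff_union_of_subset hAP, Finset.sum_union Finset.sdiff_disjoint,
    Finset.sdiff_union_of_subset hAP, sub_eq_add_neg]
  congr 1
  · have : ∀ i ∈ P \ A, (g + ∑ e ∈ Pᶜ, act (Equiv.swap i e) g) = (1 + (Pᶜ.card : ℝ)) • g := by
      intro i hi
      rw [Finset.sum_congr rfl (g := fun _ => g)]
      · rw [Finset.sum_const, add_smul, one_smul, Nat.cast_smul_eq_nsmul]
      · intro e he
        exact hg.1.act_swap (Finset.mem_sdiff.1 hi).2
          (fun h => (Finset.mem_compl.1 he) (hAP h))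
    rw [Finset.sum_congr rfl this, Finset.sum_const, Finset.card_sdiff_of_subset hAP, hAk,
      ← Nat.cast_smul_eq_nsmul ℝ, smul_smul, Nat.cast_sub]
    rw [← hAk]; exact Finset.card_le_card hAP
  · rw [← Finset.sum_neg_distrib]
    refine Finset.sum_congr rfl fun i hi => ?_
    have hs : Aᶜ = Pᶜ ∪ (P \ A) := by
      ext j; simp only [Finset.mem_compl, Finset.mem_union, Finset.mem_sdiff]
      have := @hAP j
      tauto
    have hd : Disjoint Pᶜ (P \ A) := by
      rw [Finset.disjoint_left]; intro j; simp; tauto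
    have h0 : g + ∑ j ∈ Aᶜ, act (Equiv.swap i j) g = 0 := by
      funext w; simpa using hg.2 i hi w
    rw [hs, Finset.sum_union hd, ← add_assoc] at h0
    exact eq_neg_of_add_eq_zero_left h0

/-- The exchanges of particles created by `lowerSq`, summed over level `k + 1`. -/
lemma lowerSq_sum {e₀ : I} (he : e₀ ∉ P) {k : ℕ} {g : Finset I → (I ≃ X) → ℝ}
    (hg : ∀ A ∈ P.powersetCard (k + 1), Dep site A (g A)) :
    ∑ A ∈ P.powersetCard (k + 1), lowerSq e₀ P g A
      = ∑ A ∈ P.powersetCard (k + 1), (((k : ℝ) + 1) • g A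
        + ∑ i ∈ A, ∑ j ∈ P \ A, act (Equiv.swap i j) (g A)) := by
  have h1 : ∀ C ∈ P.powersetCard k, ∑ j ∈ P \ C, act (Equiv.swap e₀ j) (lower e₀ P g C)
      = ∑ i ∈ P \ C, (g (insert i C) + ∑ j ∈ P \ insert i C,
          act (Equiv.swap i j) (g (insert i C))) := by
    intro C hC
    obtain ⟨hCP, hCk⟩ := Finset.mem_powersetCard.1 hC
    simp only [lower, act_sum]
    rw [Finset.sum_comm]
    refine Finset.sum_congr rfl fun i hi => ?_
    rw [Finset.mem_sdiff] at hi
    have hmem : insert i C ∈ P.powersetCard (k + 1) := by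
      rw [Finset.mem_powersetCard]
      exact ⟨Finset.insert_subset hi.1 hCP, by rw [Finset.card_insert_of_notMem hi.2, hCk]⟩
    have hs : P \ C = insert i (P \ insert i C) := by
      ext x; simp only [Finset.mem_sdiff, Finset.mem_insert]
      by_cases hx : x = i
      · subst hx; simp [hi]
      · simp [hx]
    rw [hs, Finset.sum_insert (by simp), act_swap_self]
    congr 1
    refine Finset.sum_congr rfl fun j hj => ?_
    simp only [Finset.mem_sdiff, Finset.mem_insert, not_or] at hj
    exact act_swap_swap (P := P) (hg _ hmem) he hi.1 hj.1 hCP hj.2.2 hi.2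
  have h2 : ∑ A ∈ P.powersetCard (k + 1), lowerSq e₀ P g A
      = ∑ C ∈ P.powersetCard k, ∑ j ∈ P \ C, act (Equiv.swap e₀ j) (lower e₀ P g C) :=
    sum_erase_reindex P k (fun C j => act (Equiv.swap e₀ j) (lower e₀ P g C))
  rw [h2, Finset.sum_congr rfl h1, sum_insert_reindex P k (fun A i =>
    (g A + ∑ j ∈ P \ A, act (Equiv.swap i j) (g A)))]
  refine Finset.sum_congr rfl fun A hA => ?_
  rw [Finset.sum_add_distrib, Finset.sum_const, (Finset.mem_powersetCard.1 hA).2,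
    ← Nat.cast_smul_eq_nsmul ℝ]
  push_cast
  rfl

/-- On sums of pure families the dynamics acts through `famStep`. -/
lemma pop_sum {e₀ : I} (he : e₀ ∉ P) (hP0 : 0 < P.card) {k : ℕ} {g : Finset I → (I ≃ X) → ℝ}
    (hg : ∀ A ∈ P.powersetCard (k + 1), Pure site A (g A)) :
    Pop P (∑ A ∈ P.powersetCard (k + 1), g A)
      = ∑ A ∈ P.powersetCard (k + 1), famStep e₀ P (k + 1) g A := by
  have h1 : ∑ i ∈ P, ((∑ A ∈ P.powersetCard (k + 1), g A)
        + ∑ e ∈ Pᶜ, act (Equiv.swap i e) (∑ A ∈ P.powersetCard (k + 1), g A))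
      = ∑ A ∈ P.powersetCard (k + 1), ∑ i ∈ P, (g A + ∑ e ∈ Pᶜ, act (Equiv.swap i e) (g A)) := by
    rw [Finset.sum_comm]
    refine Finset.sum_congr rfl fun i _ => ?_
    rw [Finset.sum_add_distrib]
    congr 1
    simp only [act_sum]
    exact Finset.sum_comm
  have h3 := lowerSq_sum he (fun A hA => (hg A hA).1)
  simp only [famStep]
  rw [Pop, h1, Finset.sum_congr rfl fun A hA => pop_pure_one hP0 hA (hg A hA),
    Finset.sum_add_distrib, ← Finset.smul_sum (s := P.powersetCard (k+1)) (f := lowerSq e₀ P g), h3,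
    Finset.smul_sum, Finset.smul_sum, ← Finset.sum_add_distrib]
  refine Finset.sum_congr rfl fun A _ => ?_
  have h4 : (P.card : ℝ) ≠ 0 := by exact_mod_cast hP0.ne'
  have h5 : (1 + (Pᶜ.card : ℝ)) ≠ 0 := by positivity
  funext w
  simp only [lam, Pi.smul_apply, Pi.sub_apply, Pi.add_apply, smul_eq_mul]
  push_cast
  field_simp
  ring

end Level

section Ghost

set_option linter.unusedSectionVars false
set_option linter.unusedVariables false

variable {I X S : Type} [Fintype I] [DecidableEq I] [Fintype X] [DecidableEq X] [DecidableEq S]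
variable {site : X → S} {P A B : Finset I} {f g : (I ≃ X) → ℝ}

/-! ### Pairing each particle with a hole -/

/-- For an involution `γ` of the positions, the permutation exchanging `x` and `γ x` for every
`x ∈ τ`. -/
def sw (γ : I → I) (hγ : Function.Involutive γ) (τ : Finset I) : Equiv.Perm I :=
  Function.Involutive.toPerm (fun x => if x ∈ τ ∨ γ x ∈ τ then γ x else x) (by
    intro x
    dsimp only
    by_cases h : x ∈ τ ∨ γ x ∈ τ
    · rw [if_pos h, hγ x, if_pos h.symm]
    · rw [if_neg h, if_neg h])

variable {γ : I → I} {hγ : Function.Involutive γ}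

lemma sw_apply (τ : Finset I) (x : I) :
    sw γ hγ τ x = if x ∈ τ ∨ γ x ∈ τ then γ x else x := rfl

lemma sw_mul_self (τ : Finset I) : sw γ hγ τ * sw γ hγ τ = 1 := by
  ext x
  exact (sw γ hγ τ).left_inv x

lemma sw_empty : sw γ hγ ∅ = 1 := by
  ext x; simp [sw_apply]

lemma sw_mul (hP : ∀ x ∈ P, γ x ∉ P) {τ τ' : Finset I} (h : τ ⊆ P) (h' : τ' ⊆ P) :
    sw γ hγ τ * sw γ hγ τ' = sw γ hγ (symmDiff τ τ') := by
  ext x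
  have h1 := @h x
  have h2 := @h' x
  have h3 := @h (γ x)
  have h4 := @h' (γ x)
  have h5 := hP x
  rw [Equiv.Perm.mul_apply]
  simp only [sw_apply, Finset.mem_symmDiff]
  by_cases a1 : x ∈ τ <;> by_cases a2 : x ∈ τ' <;> by_cases a3 : γ x ∈ τ <;>
    by_cases a4 : γ x ∈ τ' <;> simp_all [hγ x]

lemma neg_one_pow_symmDiff (τ τ' : Finset I) :
    (-1 : ℝ) ^ (symmDiff τ τ').card = (-1) ^ τ.card * (-1) ^ τ'.card := by
  have h1 : (symmDiff τ τ').card = (τ \ τ').card + (τ' \ τ).card := by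
    rw [symmDiff_def]
    exact Finset.card_union_of_disjoint disjoint_sdiff_sdiff
  have h2 := Finset.card_sdiff_add_card_inter τ τ'
  have h3 := Finset.card_sdiff_add_card_inter τ' τ
  rw [Finset.inter_comm τ' τ] at h3
  rw [h1, ← h2, ← h3, pow_add, pow_add, pow_add]
  have : (-1 : ℝ) ^ (τ ∩ τ').card * (-1) ^ (τ ∩ τ').card = 1 := by
    rw [← mul_pow]; simp
  linear_combination (-(-1 : ℝ) ^ (τ \ τ').card * (-1) ^ (τ' \ τ).card) * this

/-- The projection onto functions that are odd under each exchange `i ↔ γ i`, `i ∈ A`. -/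
def oddProj (γ : I → I) (hγ : Function.Involutive γ) (A : Finset I) (f : (I ≃ X) → ℝ) :
    (I ≃ X) → ℝ :=
  ((2 : ℝ)⁻¹ ^ A.card) • ∑ τ ∈ A.powerset, ((-1 : ℝ) ^ τ.card) • act (sw γ hγ τ) f

lemma ip_sw (τ : Finset I) (f g : (I ≃ X) → ℝ) :
    ip (act (sw γ hγ τ) f) g = ip f (act (sw γ hγ τ) g) := by
  conv_lhs => rw [← act_one g, ← sw_mul_self (γ := γ) (hγ := hγ) τ, ← act_act]
  rw [ip_act]

lemma ip_oddProj (A : Finset I) (f g : (I ≃ X) → ℝ) :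
    ip (oddProj γ hγ A f) g = ip f (oddProj γ hγ A g) := by
  simp only [oddProj, ip_smul_left, ip_smul_right, ip_sum_left, ip_sum_right, ip_sw]

lemma act_sw_oddProj (hP : ∀ x ∈ P, γ x ∉ P) (hA : A ⊆ P) {σ : Finset I} (hσ : σ ⊆ A)
    (f : (I ≃ X) → ℝ) :
    act (sw γ hγ σ) (oddProj γ hγ A f) = ((-1 : ℝ) ^ σ.card) • oddProj γ hγ A f := by
  simp only [oddProj, act_smul, act_sum, act_act]
  rw [smul_comm]
  congr 1
  rw [Finset.smul_sum]
  refine Finset.sum_bij' (fun τ _ => symmDiff σ τ) (fun τ _ => symmDiff σ τ) ?_ ?_ ?_ ?_ ?_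
  · intro τ hτ
    rw [Finset.mem_powerset] at hτ ⊢
    exact (symmDiff_le_sup).trans (sup_le hσ hτ)
  · intro τ hτ
    rw [Finset.mem_powerset] at hτ ⊢
    exact (symmDiff_le_sup).trans (sup_le hσ hτ)
  · intro τ _; simp
  · intro τ _; simp
  · intro τ hτ
    rw [Finset.mem_powerset] at hτ
    rw [sw_mul hP (hσ.trans hA) (hτ.trans hA), smul_smul, neg_one_pow_symmDiff, ← mul_assoc,
      ← mul_pow]
    simp

lemma oddProj_idem (hP : ∀ x ∈ P, γ x ∉ P) (hA : A ⊆ P) (f : (I ≃ X) → ℝ) :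
    oddProj γ hγ A (oddProj γ hγ A f) = oddProj γ hγ A f := by
  conv_lhs => rw [oddProj]
  rw [Finset.sum_congr rfl (g := fun _ => oddProj γ hγ A f)]
  · rw [Finset.sum_const, Finset.card_powerset, ← Nat.cast_smul_eq_nsmul ℝ, smul_smul]
    push_cast
    rw [← mul_pow]; norm_num
  · intro τ hτ
    rw [Finset.mem_powerset] at hτ
    rw [act_sw_oddProj hP hA hτ, smul_smul, ← mul_pow]; simp

lemma act_sw_oddProj_of_notMem (hP : ∀ x ∈ P, γ x ∉ P) (hA : A ⊆ P) {i : I} (hi : i ∈ P)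
    (hiA : i ∉ A) (hf : Dep site A f) :
    act (sw γ hγ {i}) (oddProj γ hγ A f) = oddProj γ hγ A f := by
  have hfix : act (sw γ hγ {i}) f = f := by
    refine hf.act_fix fun a ha => ?_
    rw [sw_apply, if_neg]
    simp only [Finset.mem_singleton]
    rintro (rfl | h)
    · exact hiA ha
    · exact hP a (hA ha) (h ▸ hi)
  simp only [oddProj, act_smul, act_sum, act_act]
  congr 1
  refine Finset.sum_congr rfl fun τ hτ => ?_
  rw [Finset.mem_powerset] at hτ
  rw [sw_mul hP (by simpa using hi) (hτ.trans hA), symmDiff_comm,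
    ← sw_mul hP (hτ.trans hA) (by simpa using hi), ← act_act, hfix]

/-- The odd part, relative to `A`, of any function is orthogonal to all functions of another set of
particles `B` of the same size and to their odd parts relative to `B`: some `i ∈ A \ B` has
neither `i` nor `γ i` in `B`, so the function of `B` is even under the exchange `i ↔ γ i`. -/
lemma ip_oddProj_ne (hP : ∀ x ∈ P, γ x ∉ P) (hA : A ⊆ P) (hB : B ⊆ P) (hAB : A.card = B.card)
    (hne : A ≠ B) (hg : Dep site B g) :
    ip (oddProj γ hγ A f) (oddProj γ hγ B g) = 0 ∧ ip (oddProj γ hγ A f) g = 0 := by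
  obtain ⟨i, hiA, hiB⟩ : ∃ i ∈ A, i ∉ B := by
    by_contra! h
    exact hne (Finset.eq_of_subset_of_card_le h hAB.ge)
  have h1 := act_sw_oddProj (hγ := hγ) hP hA (σ := {i}) (by simpa using hiA) f
  have key : ∀ F : (I ≃ X) → ℝ, act (sw γ hγ {i}) F = F → ip (oddProj γ hγ A f) F = 0 := by
    intro F hF
    have h2 := ip_act (sw γ hγ {i}) (oddProj γ hγ A f) F
    rw [h1, hF, ip_smul_left] at h2
    simp at h2
    linarith
  refine ⟨key _ (act_sw_oddProj_of_notMem hP hB (hA hiA) hiB hg), key _ ?_⟩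
  refine hg.act_fix fun a ha => ?_
  rw [sw_apply, if_neg]
  simp only [Finset.mem_singleton]
  rintro (rfl | h)
  · exact hiB ha
  · exact hP a (hB ha) (h ▸ hA hiA)

/-- Permutations moving only points of `τ`. -/
def permsOf (τ : Finset I) : Finset (Equiv.Perm I) :=
  Finset.univ.filter fun π => ∀ x, x ∉ τ → π x = x

lemma mem_permsOf {τ : Finset I} {π : Equiv.Perm I} : π ∈ permsOf τ ↔ ∀ x, x ∉ τ → π x = x := by
  simp [permsOf]

/-- Symmetrisation over the coordinates in `τ`. -/
def symm (τ : Finset I) (f : (I ≃ X) → ℝ) : (I ≃ X) → ℝ := ∑ π ∈ permsOf τ, act π f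

lemma symm_insert {τ : Finset I} {i : I} (hi : i ∉ τ) (f : (I ≃ X) → ℝ) :
    ∑ a ∈ insert i τ, symm τ (act (Equiv.swap i a) f) = symm (insert i τ) f := by
  simp only [symm, act_act]
  rw [Finset.sum_sigma']
  refine Finset.sum_bij' (fun x _ => x.2 * Equiv.swap i x.1)
    (fun π _ => ⟨π⁻¹ i, π * Equiv.swap i (π⁻¹ i)⟩) ?_ ?_ ?_ ?_ ?_
  · rintro ⟨a, π⟩ h
    simp only [Finset.mem_sigma, mem_permsOf] at h ⊢
    intro x hx
    have hxi : x ≠ i := by rintro rfl; simp at hx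
    have hxa : x ≠ a := by rintro rfl; exact hx h.1
    rw [Equiv.Perm.mul_apply, Equiv.swap_apply_of_ne_of_ne hxi hxa]
    exact h.2 x fun h' => hx (by simp [h'])
  · intro π h
    simp only [Finset.mem_sigma, mem_permsOf] at h ⊢
    have hmem : π⁻¹ i ∈ insert i τ := by
      by_contra hc
      have := h _ hc
      have hinv : π (π⁻¹ i) = i := by simp
      rw [hinv] at this
      rw [← this] at hc
      simp at hc
    refine ⟨hmem, fun x hx => ?_⟩
    rw [Equiv.Perm.mul_apply]
    by_cases hxi : x = i
    · subst hxi; simp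
    · have hx' : x ∉ insert i τ := by simp [hxi, hx]
      have hxa : x ≠ π⁻¹ i := by rintro rfl; exact hx' hmem
      rw [Equiv.swap_apply_of_ne_of_ne hxi hxa]
      exact h x hx'
  · rintro ⟨a, π⟩ h
    simp only [Finset.mem_sigma, mem_permsOf] at h
    have h1 : π⁻¹ i = i := by
      rw [Equiv.Perm.inv_eq_iff_eq]; exact (h.2 i hi).symm
    have h2 : (π * Equiv.swap i a)⁻¹ i = a := by
      rw [mul_inv_rev, Equiv.Perm.mul_apply, h1]; simp
    simp only [h2, mul_assoc, Equiv.swap_mul_self, mul_one]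
  · intro π h
    simp [mul_assoc]
  · rintro ⟨a, π⟩ h
    rfl

/-- Symmetrisation is a multiple of an orthogonal projection. -/
lemma ip_symm_nonneg (τ : Finset I) (g : (I ≃ X) → ℝ) : 0 ≤ ip g (symm τ g) := by
  have hinv : ∀ π ∈ permsOf τ, act π (symm τ g) = symm τ g := by
    intro π hπ
    rw [mem_permsOf] at hπ
    simp only [symm, act_sum, act_act]
    refine Finset.sum_bij' (fun u _ => π * u) (fun u _ => π⁻¹ * u) ?_ ?_ ?_ ?_ ?_
    · intro u hu
      rw [mem_permsOf] at hu ⊢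
      intro x hx
      rw [Equiv.Perm.mul_apply, hu x hx, hπ x hx]
    · intro u hu
      rw [mem_permsOf] at hu ⊢
      intro x hx
      rw [Equiv.Perm.mul_apply, hu x hx, Equiv.Perm.inv_eq_iff_eq, hπ x hx]
    · intro u _; simp
    · intro u _; simp
    · intro u _; rfl
  have h1 : ((permsOf τ).card : ℝ) * ip g (symm τ g) = ip (symm τ g) (symm τ g) := by
    conv_rhs => rw [show symm τ g = ∑ π ∈ permsOf τ, act π g from rfl]
    change _ = ip (∑ π ∈ permsOf τ, act π g) (symm τ g)
    rw [ip_sum_left, Finset.sum_congr rfl (g := fun _ => ip g (symm τ g)), Finset.sum_const,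
      nsmul_eq_mul]
    intro π hπ
    conv_lhs => rw [← hinv π hπ]
    rw [ip_act]
  have h2 : (0 : ℝ) < (permsOf τ).card := by
    have : (1 : Equiv.Perm I) ∈ permsOf τ := by rw [mem_permsOf]; simp
    exact_mod_cast Finset.card_pos.2 ⟨_, this⟩
  have h3 := ip_self_nonneg (symm τ g)
  rw [← h1] at h3
  exact nonneg_of_mul_nonneg_right h3 h2

/-- Averaging out the coordinates in `τ` of a pure function of `A` against the same function read
at the holes paired with `τ` produces, up to a sign `(-1) ^ |τ|` and a positive factor, the
symmetrisation over `τ`. -/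
lemma ip_sw_eq_symm (hP : ∀ x ∈ P, γ x ∉ P) (hA : A ⊆ P) (hg : Pure site A g) (τ : Finset I) :
    τ ⊆ A → ∃ c : ℝ, 0 < c ∧ ∀ h : (I ≃ X) → ℝ, Dep site A h →
      (-1 : ℝ) ^ τ.card * ip g (act (sw γ hγ τ) h) = c * ip g (symm τ h) := by
  induction τ using Finset.induction_on with
  | empty =>
    intro _
    refine ⟨1, one_pos, fun h _ => ?_⟩
    have : permsOf (∅ : Finset I) = {1} := by
      ext π; rw [mem_permsOf]; simp [Equiv.ext_iff]
    simp [symm, this, sw_empty]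
  | insert i τ hiτ ih =>
    intro hτA
    obtain ⟨c, hc, ihc⟩ := ih ((Finset.subset_insert _ _).trans hτA)
    have hiA : i ∈ A := hτA (Finset.mem_insert_self _ _)
    set B := A.image (sw γ hγ (insert i τ)) with hB
    have hγA : ∀ x ∈ A, γ x ∉ A := fun x hx h => hP x (hA hx) (hA h)
    have hsw : ∀ x ∈ A, sw γ hγ (insert i τ) x = if x ∈ insert i τ then γ x else x := by
      intro x hx
      rw [sw_apply]
      have : γ x ∉ insert i τ := fun h => hγA x hx (hτA h)
      simp only [this, or_false]
    have hsw' : ∀ x ∈ A, sw γ hγ τ x = if x ∈ τ then γ x else x := by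
      intro x hx
      rw [sw_apply]
      have : γ x ∉ τ := fun h => hγA x hx (hτA (Finset.mem_insert_of_mem h))
      simp only [this, or_false]
    have hiB : i ∉ B := by
      rw [hB, Finset.mem_image]
      rintro ⟨x, hx, hxi⟩
      rw [hsw x hx] at hxi
      split_ifs at hxi with h
      · exact hγA x hx (hxi ▸ hiA)
      · subst hxi; simp at h
    have hBA : B \ A = (insert i τ).image γ := by
      ext y
      simp only [hB, Finset.mem_sdiff]
      constructor
      · rintro ⟨hy, hyA⟩
        obtain ⟨x, hx, rfl⟩ := Finset.mem_image.1 hy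
        rw [hsw x hx] at hyA ⊢
        split_ifs at hyA ⊢ with h
        · exact Finset.mem_image_of_mem _ h
        · exact absurd hx hyA
      · intro hy
        obtain ⟨x, hx, rfl⟩ := Finset.mem_image.1 hy
        refine ⟨Finset.mem_image.2 ⟨x, hτA hx, ?_⟩, hγA x (hτA hx)⟩
        rw [hsw x (hτA hx), if_pos hx]
    refine ⟨c / (1 + ((A ∪ B)ᶜ.card : ℝ)), by positivity, fun h hh => ?_⟩
    have hrec := hg.recursion (hh.transl (sw γ hγ (insert i τ))) hiA hiB
    rw [hBA, Finset.sum_image (fun x _ y _ hxy => hγ.injective hxy)] at hrec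
    have hterm : ∀ a ∈ insert i τ,
        ip g (act (Equiv.swap i (γ a)) (act (sw γ hγ (insert i τ)) h))
          = ip g (act (sw γ hγ τ) (act (Equiv.swap i a) h)) := by
      intro a ha
      have e1 : act (Equiv.swap i (γ a)) (act (sw γ hγ (insert i τ)) h)
          = act (Equiv.swap (γ i) (γ a)) (act (sw γ hγ τ) (act (Equiv.swap i a) h)) := by
        simp only [act_act]
        refine hh.act_congr fun x hx => ?_
        simp only [Equiv.Perm.mul_apply]
        have hne : ∀ y ∈ A, ∀ z ∈ A, y ≠ γ z := fun y hy z hz hyz => hγA z hz (hyz ▸ hy)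
        have haA := hτA ha
        rw [hsw x hx]
        by_cases hxi : x = i
        · subst hxi
          rw [if_pos (by simp), Equiv.swap_apply_left]
          by_cases hax : a = x
          · subst hax
            rw [hsw' _ hx, if_neg hiτ]; simp
          · have haτ : a ∈ τ := (Finset.mem_insert.1 ha).resolve_left hax
            rw [hsw' _ haA, if_pos haτ, Equiv.swap_apply_right]
            exact Equiv.swap_apply_of_ne_of_ne (hne _ hx _ hx).symm
              (fun h' => hax (hγ.injective h').symm)
        · by_cases hxa : x = a
          · subst hxa
            rw [if_pos ha, Equiv.swap_apply_right, Equiv.swap_apply_right, hsw' _ hiA,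
              if_neg hiτ, Equiv.swap_apply_of_ne_of_ne (hne _ hiA _ hiA) (hne _ hiA _ hx)]
          · rw [Equiv.swap_apply_of_ne_of_ne hxi hxa, hsw' x hx]
            have : (x ∈ insert i τ) ↔ x ∈ τ := by simp [hxi]
            simp only [this]
            split_ifs with hxτ
            · rw [Equiv.swap_apply_of_ne_of_ne (hne _ hiA _ hx).symm
                (fun h' => hxa (hγ.injective h')), Equiv.swap_apply_of_ne_of_ne
                (fun h' => hxi (hγ.injective h')) (fun h' => hxa (hγ.injective h'))]
            · rw [Equiv.swap_apply_of_ne_of_ne hxi (hne _ hx _ haA),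
                Equiv.swap_apply_of_ne_of_ne (hne _ hx _ hiA) (hne _ hx _ haA)]
      rw [e1, ← ip_act_swap, hg.1.act_swap (hγA i hiA) (hγA a (hτA ha))]
    rw [Finset.sum_congr rfl hterm] at hrec
    have hdep : ∀ a ∈ insert i τ, Dep site A (act (Equiv.swap i a) h) := by
      intro a ha
      have := hh.transl (Equiv.swap i a)
      convert this using 1
      refine (Finset.eq_of_subset_of_card_le ?_ ?_).symm
      · intro y hy
        obtain ⟨x, hx, rfl⟩ := Finset.mem_image.1 hy
        rw [Equiv.swap_apply_def]
        split_ifs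
        · exact hτA ha
        · exact hiA
        · exact hx
      · rw [Finset.card_image_of_injective _ (Equiv.injective _)]
    have hsum : (-1 : ℝ) ^ τ.card * ∑ a ∈ insert i τ, ip g (act (sw γ hγ τ) (act (Equiv.swap i a) h))
        = c * ip g (symm (insert i τ) h) := by
      rw [← symm_insert hiτ, ip_sum_right, Finset.mul_sum, Finset.mul_sum]
      exact Finset.sum_congr rfl fun a ha => ihc _ (hdep a ha)
    have hpos : (1 + ((A ∪ B)ᶜ.card : ℝ)) ≠ 0 := by positivity
    rw [Finset.card_insert_of_notMem hiτ, pow_succ, div_mul_eq_mul_div, eq_div_iff hpos]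
    linear_combination (-(-1 : ℝ) ^ τ.card) * hrec + hsum

/-- The odd part retains a proportion `2 ^ (-|A|)` of the square norm of a pure function of `A`. -/
lemma ip_oddProj_ge (hP : ∀ x ∈ P, γ x ∉ P) (hA : A ⊆ P) (hg : Pure site A g) :
    (2 : ℝ)⁻¹ ^ A.card * ip g g ≤ ip g (oddProj γ hγ A g) := by
  rw [oddProj, ip_smul_right, ip_sum_right]
  refine mul_le_mul_of_nonneg_left ?_ (by positivity)
  have h0 : ip g g = ip g ((-1 : ℝ) ^ (∅ : Finset I).card • act (sw γ hγ ∅) g) := by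
    simp [sw_empty, act_one]
  rw [h0]
  refine Finset.single_le_sum (f := fun τ : Finset I => ip g ((-1 : ℝ) ^ τ.card • act (sw γ hγ τ) g))
    (fun τ hτ => ?_) (Finset.empty_mem_powerset A)
  obtain ⟨c, hc, h⟩ := ip_sw_eq_symm (hγ := hγ) hP hA hg τ (Finset.mem_powerset.1 hτ)
  change 0 ≤ ip g ((-1 : ℝ) ^ τ.card • act (sw γ hγ τ) g)
  rw [ip_smul_right, h g hg.1]
  exact mul_nonneg hc.le (ip_symm_nonneg τ g)

/-- A sum of pure functions of level `k` controls its summands: there is no cancellation beyond a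
factor `2 ^ k`. -/
lemma famSq_le (γ : I → I) (hγ : Function.Involutive γ) (hP : ∀ x ∈ P, γ x ∉ P) {k : ℕ}
    {g : Finset I → (I ≃ X) → ℝ} (hg : ∀ A ∈ P.powersetCard k, Pure site A (g A)) :
    famSq P k g ≤ 2 ^ k * ip (∑ A ∈ P.powersetCard k, g A) (∑ A ∈ P.powersetCard k, g A) := by
  set F := ∑ A ∈ P.powersetCard k, g A with hF
  set H := ∑ A ∈ P.powersetCard k, oddProj γ hγ A (g A) with hH
  have hsub : ∀ A ∈ P.powersetCard k, A ⊆ P ∧ A.card = k := fun A hA =>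
    Finset.mem_powersetCard.1 hA
  have hHF : ip H F = ∑ A ∈ P.powersetCard k, ip (g A) (oddProj γ hγ A (g A)) := by
    rw [hH, ip_sum_left]
    refine Finset.sum_congr rfl fun A hA => ?_
    rw [hF, ip_sum_right, Finset.sum_eq_single A]
    · rw [ip_comm]
    · intro B hB hBA
      exact (ip_oddProj_ne hP (hsub A hA).1 (hsub B hB).1
        ((hsub A hA).2.trans (hsub B hB).2.symm) hBA.symm (hg B hB).1).2
    · intro h; exact absurd hA h
  have hHH : ip H H = ∑ A ∈ P.powersetCard k, ip (g A) (oddProj γ hγ A (g A)) := by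
    conv_lhs => rw [hH]
    rw [ip_sum_left]
    refine Finset.sum_congr rfl fun A hA => ?_
    rw [ip_sum_right, Finset.sum_eq_single A]
    · rw [ip_oddProj, oddProj_idem hP (hsub A hA).1]
    · intro B hB hBA
      exact (ip_oddProj_ne hP (hsub A hA).1 (hsub B hB).1
        ((hsub A hA).2.trans (hsub B hB).2.symm) hBA.symm (hg B hB).1).1
    · intro h; exact absurd hA h
  have hle : ip H H ≤ ip F F := by
    have h1 := ip_self_nonneg (F + (-1 : ℝ) • H)
    simp only [ip_add_left, ip_add_right, ip_smul_left, ip_smul_right] at h1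
    rw [ip_comm F H, hHF, ← hHH] at h1
    linarith
  have hge : (2 : ℝ)⁻¹ ^ k * famSq P k g ≤ ip H H := by
    rw [hHH, famSq, Finset.mul_sum]
    refine Finset.sum_le_sum fun A hA => ?_
    have := ip_oddProj_ge (hγ := hγ) hP (hsub A hA).1 (hg A hA)
    rwa [(hsub A hA).2] at this
  calc famSq P k g = 2 ^ k * ((2 : ℝ)⁻¹ ^ k * famSq P k g) := by
        rw [← mul_assoc, ← mul_pow]; norm_num
    _ ≤ 2 ^ k * ip F F := mul_le_mul_of_nonneg_left (hge.trans hle) (by positivity)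

end Ghost

section Count

set_option linter.unusedSectionVars false
set_option linter.unusedVariables false

variable {I X S : Type} [Fintype I] [DecidableEq I] [Fintype X] [DecidableEq X]
  [Fintype S] [DecidableEq S]
variable {site : X → S} {A B : Finset I} {f g : (I ≃ X) → ℝ} {kap : ℕ}

/-! ### Counting placements with prescribed sites -/

/-- The placements with the same sites as `w` at the positions in `A`. -/
def agree (site : X → S) (A : Finset I) (w : I ≃ X) : Finset (I ≃ X) :=
  Finset.univ.filter fun w' => ∀ a ∈ A, site (w' a) = site (w a)

/-- The number of positions of `A` which `w` puts at the site `v`. -/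
def occ (site : X → S) (A : Finset I) (w : I ≃ X) (v : S) : ℕ :=
  (A.filter fun a => site (w a) = v).card

lemma mem_agree {w w' : I ≃ X} : w' ∈ agree site A w ↔ ∀ a ∈ A, site (w' a) = site (w a) := by
  simp [agree]

lemma occ_add_occ_compl (hfib : ∀ v, (Finset.univ.filter fun x => site x = v).card = kap)
    (w : I ≃ X) (v : S) : occ site A w v + occ site Aᶜ w v = kap := by
  rw [← hfib v]
  unfold occ
  rw [← Finset.card_union_of_disjoint
    (Finset.disjoint_filter_filter disjoint_compl_right),
    ← Finset.filter_union, Finset.union_compl]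
  refine Finset.card_bij (fun a _ => w a) ?_ ?_ ?_
  · intro a ha; simpa using ha
  · intro a _ b _ h; exact w.injective h
  · intro x hx; exact ⟨w.symm x, by simpa using hx, by simp⟩

/-- Prescribing the site of one more position: double counting of the choices of a position outside
`A` for the required site. -/
lemma card_agree_insert (hfib : ∀ v, (Finset.univ.filter fun x => site x = v).card = kap)
    {a : I} (ha : a ∉ A) (w : I ≃ X) :
    (agree site (insert a A) w).card * Aᶜ.card
      = (agree site A w).card * (kap - occ site A w (site (w a))) := by
  have h1 : ∑ w' ∈ agree site A w, (occ site Aᶜ w' (site (w a)))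
      = (agree site A w).card * (kap - occ site A w (site (w a))) := by
    rw [Finset.sum_const_nat]
    intro w' hw'
    have h2 := occ_add_occ_compl (A := A) hfib w' (site (w a))
    have h3 : occ site A w' (site (w a)) = occ site A w (site (w a)) := by
      unfold occ
      congr 1
      refine Finset.filter_congr fun b hb => ?_
      rw [mem_agree.1 hw' b hb]
    omega
  rw [← h1]
  simp only [occ, Finset.card_filter]
  rw [Finset.sum_comm, mul_comm, ← smul_eq_mul, ← Finset.sum_const]
  refine Finset.sum_congr rfl fun j hj => ?_
  rw [← Finset.card_filter]
  have hjA : j ∉ A := by simpa using hj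
  have hswap : ∀ b ∈ A, Equiv.swap a j b = b := fun b hb =>
    Equiv.swap_apply_of_ne_of_ne (by rintro rfl; exact ha hb) (by rintro rfl; exact hjA hb)
  refine Finset.card_bij' (fun w' _ => (Equiv.swap a j).trans w')
    (fun w' _ => (Equiv.swap a j).trans w') ?_ ?_ ?_ ?_
  · intro w' hw'
    rw [mem_agree] at hw'
    rw [Finset.mem_filter, mem_agree]
    refine ⟨fun b hb => ?_, ?_⟩
    · simp [hswap b hb, hw' b (by simp [hb])]
    · simp [hw' a (by simp)]
  · intro w' hw'
    rw [Finset.mem_filter, mem_agree] at hw'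
    rw [mem_agree]
    intro b hb
    rcases Finset.mem_insert.1 hb with rfl | hb
    · simp [hw'.2]
    · simp [hswap b hb, hw'.1 b hb]
  · intro w' _; ext x; simp
  · intro w' _; ext x; simp

/-- The number of placements with prescribed sites on `A` is a ratio of falling factorials. -/
lemma card_agree (hfib : ∀ v, (Finset.univ.filter fun x => site x = v).card = kap)
    (A : Finset I) (w : I ≃ X) :
    (agree site A w).card * (Fintype.card I).descFactorial A.card
      = Fintype.card (I ≃ X) * ∏ v, kap.descFactorial (occ site A w v) := by
  induction A using Finset.induction_on with
  | empty => simp [agree, occ]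
  | insert a A ha ih =>
    have h1 := card_agree_insert hfib ha w
    rw [Finset.card_insert_of_notMem ha, Nat.descFactorial_succ, ← Finset.card_compl, ← mul_assoc,
      h1, mul_right_comm, ih, mul_assoc]
    congr 1
    have hocc : ∀ v, occ site (insert a A) w v
        = if v = site (w a) then occ site A w v + 1 else occ site A w v := by
      intro v
      unfold occ
      rw [Finset.filter_insert]
      by_cases hv : v = site (w a)
      · rw [if_pos hv.symm, if_pos hv, Finset.card_insert_of_notMem (by simp [ha])]
      · rw [if_neg (Ne.symm hv), if_neg hv]
    rw [← Finset.mul_prod_erase Finset.univ _ (Finset.mem_univ (site (w a))),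
      ← Finset.mul_prod_erase Finset.univ _ (Finset.mem_univ (site (w a))), hocc, if_pos rfl,
      Nat.descFactorial_succ, mul_right_comm, mul_comm (kap.descFactorial _)]
    congr 1
    refine Finset.prod_congr rfl fun v hv => ?_
    rw [hocc, if_neg (Finset.ne_of_mem_erase hv)]

lemma pow_le_exp_mul_descFactorial : ∀ {k c : ℕ}, c ≤ k →
    (k : ℝ) ^ c ≤ Real.exp c * (k.descFactorial c : ℝ) := by
  intro k
  induction k with
  | zero => intro c hc; obtain rfl : c = 0 := by omega
            simp
  | succ k ih =>
    intro c hc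
    rcases c with _ | c
    · simp
    · have hck : c ≤ k := by omega
      have h1 := ih hck
      rcases Nat.eq_zero_or_pos k with rfl | hk
      · obtain rfl : c = 0 := by omega
        simp
      · have hk' : (0 : ℝ) < k := by exact_mod_cast hk
        have h2 : ((k : ℝ) + 1) ^ c ≤ Real.exp 1 * (k : ℝ) ^ c := by
          have h3 : (1 : ℝ) / k + 1 ≤ Real.exp (1 / k) := Real.add_one_le_exp _
          have h4 : ((1 : ℝ) / k + 1) ^ c ≤ Real.exp 1 := by
            calc ((1 : ℝ) / k + 1) ^ c ≤ Real.exp (1 / k) ^ c := by gcongr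
              _ = Real.exp (c * (1 / k)) := by rw [← Real.exp_nat_mul]
              _ ≤ Real.exp 1 := by
                  apply Real.exp_le_exp.2
                  rw [mul_one_div, div_le_one hk']
                  exact_mod_cast hck
          calc ((k : ℝ) + 1) ^ c = ((1 : ℝ) / k + 1) ^ c * (k : ℝ) ^ c := by
                rw [← mul_pow]; congr 1; field_simp; ring
            _ ≤ _ := by gcongr
        rw [Nat.succ_descFactorial_succ]
        push_cast
        rw [Real.exp_add]
        calc ((k : ℝ) + 1) ^ (c + 1) = (k + 1) * ((k : ℝ) + 1) ^ c := by ring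
          _ ≤ (k + 1) * (Real.exp 1 * (k : ℝ) ^ c) := by gcongr
          _ ≤ (k + 1) * (Real.exp 1 * (Real.exp c * (k.descFactorial c : ℝ))) := by gcongr
          _ = _ := by ring

/-- A prescription of the sites of `A` has probability at least `(e |S|) ^ (-|A|)`. -/
lemma card_le_agree (hfib : ∀ v, (Finset.univ.filter fun x => site x = v).card = kap)
    (hk : 0 < kap) (hI : Fintype.card I = kap * Fintype.card S) (A : Finset I) (w : I ≃ X) :
    (Fintype.card (I ≃ X) : ℝ)
      ≤ (Real.exp 1 * Fintype.card S) ^ A.card * (agree site A w).card := by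
  have h1 : ((agree site A w).card : ℝ) * ((Fintype.card I).descFactorial A.card : ℝ)
      = Fintype.card (I ≃ X) * ∏ v, (kap.descFactorial (occ site A w v) : ℝ) := by
    exact_mod_cast card_agree hfib A w
  have hsum : ∑ v, occ site A w v = A.card := by
    unfold occ
    exact (Finset.card_eq_sum_card_fiberwise (fun a _ => Finset.mem_univ _)).symm
  have h2 : (kap : ℝ) ^ A.card
      ≤ Real.exp 1 ^ A.card * ∏ v, (kap.descFactorial (occ site A w v) : ℝ) := by
    calc (kap : ℝ) ^ A.card = ∏ v, (kap : ℝ) ^ (occ site A w v) := by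
          rw [Finset.prod_pow_eq_pow_sum, hsum]
      _ ≤ ∏ v, (Real.exp 1 ^ (occ site A w v) * (kap.descFactorial (occ site A w v) : ℝ)) := by
          refine Finset.prod_le_prod (fun _ _ => by positivity) fun v _ => ?_
          have := pow_le_exp_mul_descFactorial (k := kap) (c := occ site A w v)
            (by have := occ_add_occ_compl (A := A) hfib w v; omega)
          rwa [← Real.exp_one_pow] at this
      _ = _ := by rw [Finset.prod_mul_distrib, Finset.prod_pow_eq_pow_sum, hsum]
  have h3 : ((Fintype.card I).descFactorial A.card : ℝ)
      ≤ (kap : ℝ) ^ A.card * (Fintype.card S : ℝ) ^ A.card := by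
    rw [← mul_pow]
    have := Nat.descFactorial_le_pow (Fintype.card I) A.card
    rw [hI] at this ⊢
    exact_mod_cast this
  have hkp : (0 : ℝ) < (kap : ℝ) ^ A.card := by positivity
  refine le_of_mul_le_mul_left ?_ hkp
  calc (kap : ℝ) ^ A.card * (Fintype.card (I ≃ X) : ℝ)
      ≤ (Real.exp 1 ^ A.card * ∏ v, (kap.descFactorial (occ site A w v) : ℝ))
          * (Fintype.card (I ≃ X) : ℝ) := by gcongr
    _ = Real.exp 1 ^ A.card * (((agree site A w).card : ℝ)
          * ((Fintype.card I).descFactorial A.card : ℝ)) := by rw [h1]; ring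
    _ ≤ Real.exp 1 ^ A.card * (((agree site A w).card : ℝ)
          * ((kap : ℝ) ^ A.card * (Fintype.card S : ℝ) ^ A.card)) := by gcongr
    _ = _ := by rw [mul_pow]; ring

/-- Pointwise bound by the square norm for functions of few positions. -/
lemma Dep.sq_le (hg : Dep site A g)
    (hfib : ∀ v, (Finset.univ.filter fun x => site x = v).card = kap)
    (hk : 0 < kap) (hI : Fintype.card I = kap * Fintype.card S) (w : I ≃ X) :
    (Fintype.card (I ≃ X) : ℝ) * g w ^ 2
      ≤ (Real.exp 1 * Fintype.card S) ^ A.card * ip g g := by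
  have h1 : ((agree site A w).card : ℝ) * g w ^ 2 ≤ ip g g := by
    calc ((agree site A w).card : ℝ) * g w ^ 2 = ∑ w' ∈ agree site A w, g w' * g w' := by
          rw [Finset.sum_congr rfl (g := fun _ => g w ^ 2), Finset.sum_const, nsmul_eq_mul]
          intro w' hw'
          rw [hg w' w (mem_agree.1 hw'), sq]
      _ ≤ _ := Finset.sum_le_sum_of_subset_of_nonneg (Finset.subset_univ _)
          fun _ _ _ => mul_self_nonneg _
  calc _ ≤ (Real.exp 1 * Fintype.card S) ^ A.card * (agree site A w).card * g w ^ 2 := by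
        gcongr; exact card_le_agree hfib hk hI A w
    _ = (Real.exp 1 * Fintype.card S) ^ A.card * ((agree site A w).card * g w ^ 2) := by ring
    _ ≤ _ := by gcongr

end Count

section Upper

set_option linter.unusedSectionVars false
set_option linter.unusedVariables false

variable {I X S : Type} [Fintype I] [DecidableEq I] [Fintype X] [DecidableEq X]
  [Fintype S] [DecidableEq S]
variable {site : X → S} {P A B : Finset I} {f g F : (I ≃ X) → ℝ} {kap : ℕ}

/-! ### Convergence of the lifted dynamics -/

lemma pop_apply (P : Finset I) (F : (I ≃ X) → ℝ) (w : I ≃ X) :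
    Pop P F w = (1 / ((P.card : ℝ) * (1 + (Pᶜ.card : ℝ))))
      * ∑ i ∈ P, (F w + ∑ e ∈ Pᶜ, F ((Equiv.swap i e).trans w)) := by
  simp [Pop, act]

lemma pop_add (P : Finset I) (F G : (I ≃ X) → ℝ) : Pop P (F + G) = Pop P F + Pop P G := by
  funext w
  simp only [pop_apply, Pi.add_apply, Finset.sum_add_distrib]
  ring

lemma pop_smul (P : Finset I) (c : ℝ) (F : (I ≃ X) → ℝ) : Pop P (c • F) = c • Pop P F := by
  funext w
  simp only [pop_apply, Pi.smul_apply, smul_eq_mul, ← Finset.mul_sum, ← mul_add]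
  ring

lemma pop_finset_sum {ι : Type*} (P : Finset I) (s : Finset ι) (F : ι → (I ≃ X) → ℝ) :
    Pop P (∑ k ∈ s, F k) = ∑ k ∈ s, Pop P (F k) := by
  induction s using Finset.induction_on with
  | empty => funext w; simp [pop_apply]
  | insert a s ha ih => rw [Finset.sum_insert ha, Finset.sum_insert ha, pop_add, ih]

lemma pop_const (hP0 : 0 < P.card) (c : ℝ) : Pop P (fun _ : I ≃ X => c) = fun _ => c := by
  funext w
  have h1 : (0 : ℝ) < P.card := by exact_mod_cast hP0
  have h2 : (0 : ℝ) < 1 + (Pᶜ.card : ℝ) := by positivity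
  rw [pop_apply]
  simp only [Finset.sum_const, nsmul_eq_mul]
  field_simp

lemma pop_mono (P : Finset I) {F G : (I ≃ X) → ℝ} (h : F ≤ G) : Pop P F ≤ Pop P G := by
  intro w
  rw [pop_apply, pop_apply]
  refine mul_le_mul_of_nonneg_left ?_ (by positivity)
  refine Finset.sum_le_sum fun i _ => add_le_add (h w) (Finset.sum_le_sum fun e _ => h _)

lemma pop_iter_finset_sum {ι : Type*} (P : Finset I) (s : Finset ι) (F : ι → (I ≃ X) → ℝ) (t : ℕ) :
    (Pop P)^[t] (∑ k ∈ s, F k) = ∑ k ∈ s, (Pop P)^[t] (F k) := by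
  induction t with
  | zero => rfl
  | succ t ih => simp only [Function.iterate_succ_apply', ih, pop_finset_sum]

lemma pop_iter_const (hP0 : 0 < P.card) (c : ℝ) (t : ℕ) :
    (Pop P)^[t] (fun _ : I ≃ X => c) = fun _ => c := by
  induction t with
  | zero => rfl
  | succ t ih => rw [Function.iterate_succ_apply', ih, pop_const hP0]

lemma sum_act (u : Equiv.Perm I) (F : (I ≃ X) → ℝ) : ∑ w, F (u.trans w) = ∑ w, F w :=
  Fintype.sum_equiv (Equiv.equivCongr u.symm (Equiv.refl X)) (fun w => F (u.trans w)) F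
    (fun w => rfl)

lemma sum_pop (hP0 : 0 < P.card) (F : (I ≃ X) → ℝ) : ∑ w, Pop P F w = ∑ w, F w := by
  have h1 : (0 : ℝ) < P.card := by exact_mod_cast hP0
  have h2 : (0 : ℝ) < 1 + (Pᶜ.card : ℝ) := by positivity
  simp only [pop_apply]
  rw [← Finset.mul_sum, Finset.sum_comm]
  have : ∀ i ∈ P, ∑ w, (F w + ∑ e ∈ Pᶜ, F ((Equiv.swap i e).trans w))
      = (1 + (Pᶜ.card : ℝ)) * ∑ w, F w := by
    intro i _
    rw [Finset.sum_add_distrib, Finset.sum_comm]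
    simp only [sum_act, Finset.sum_const, nsmul_eq_mul]
    ring
  rw [Finset.sum_congr rfl this, Finset.sum_const, nsmul_eq_mul]
  field_simp

lemma lam_nonneg (hP : P.card ≤ Pᶜ.card) {k : ℕ} (hk : k + 1 ≤ P.card) : 0 ≤ lam P (k + 1) := by
  refine le_trans ?_ (lam_lower hP (by omega) hk)
  have : (k : ℝ) ≤ P.card := by exact_mod_cast (by omega : k ≤ P.card)
  have : 0 ≤ (P.card : ℝ) - k := by linarith
  positivity

lemma lam_le_exp (P : Finset I) (k : ℕ) :
    lam P k ≤ Real.exp (-(1 / (P.card : ℝ) * (1 - 1 / (1 + (Pᶜ.card : ℝ))))) ^ k := by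
  rw [← Real.exp_nat_mul]
  refine le_trans (le_of_eq ?_) (Real.add_one_le_exp _)
  unfold lam
  ring

/-- The level `k + 1` part stays a sum of pure functions, with square norm decaying like
`lam ^ (2 t)`. -/
lemma pop_iter_level {e₀ : I} (he : e₀ ∉ P) (hP : P.card ≤ Pᶜ.card) {k : ℕ}
    (hk : k + 1 ≤ P.card) {g : Finset I → (I ≃ X) → ℝ}
    (hg : ∀ A ∈ P.powersetCard (k + 1), Pure site A (g A)) (t : ℕ) :
    ∃ h : Finset I → (I ≃ X) → ℝ, (∀ A ∈ P.powersetCard (k + 1), Pure site A (h A)) ∧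
      (Pop P)^[t] (∑ A ∈ P.powersetCard (k + 1), g A) = ∑ A ∈ P.powersetCard (k + 1), h A ∧
      famSq P (k + 1) h ≤ (lam P (k + 1) ^ t) ^ 2 * famSq P (k + 1) g := by
  induction t with
  | zero => exact ⟨g, hg, rfl, by simp⟩
  | succ t ih =>
    obtain ⟨h, h1, h2, h3⟩ := ih
    refine ⟨famStep e₀ P (k + 1) h, famStep_pure he h1, ?_, ?_⟩
    · rw [Function.iterate_succ_apply', h2, pop_sum he (by omega) h1]
    · refine (famSq_famStep_le e₀ hP hk h).trans ?_
      calc _ ≤ lam P (k + 1) ^ 2 * ((lam P (k + 1) ^ t) ^ 2 * famSq P (k + 1) g) := by gcongr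
        _ = _ := by ring

/-- Decay of the level `k + 1` part of a function, in supremum norm. -/
lemma pop_iter_level_le {e₀ : I} (he : e₀ ∉ P) (hP : P.card ≤ Pᶜ.card) (γ : I → I)
    (hγ : Function.Involutive γ) (hγP : ∀ x ∈ P, γ x ∉ P)
    (hfib : ∀ v, (Finset.univ.filter fun x => site x = v).card = kap)
    (hk0 : 0 < kap) (hI : Fintype.card I = kap * Fintype.card S) {k : ℕ}
    (hk : k + 1 ≤ P.card) {g : Finset I → (I ≃ X) → ℝ}
    (hg : ∀ A ∈ P.powersetCard (k + 1), Pure site A (g A))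
    (hle : ip (∑ A ∈ P.powersetCard (k + 1), g A) (∑ A ∈ P.powersetCard (k + 1), g A)
      ≤ Fintype.card (I ≃ X)) (t : ℕ) (w : I ≃ X) :
    |(Pop P)^[t] (∑ A ∈ P.powersetCard (k + 1), g A) w|
      ≤ (Real.sqrt (2 * Real.exp 1 * Fintype.card S * P.card)
        * Real.exp (-(t / (P.card : ℝ) * (1 - 1 / (1 + (Pᶜ.card : ℝ)))))) ^ (k + 1) := by
  obtain ⟨h, h1, h2, h3⟩ := pop_iter_level he hP hk hg t
  have hG : (0 : ℝ) < Fintype.card (I ≃ X) := by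
    exact_mod_cast Fintype.card_pos_iff.2 ⟨w⟩
  have hfam := famSq_le γ hγ hγP hg
  rw [h2, Finset.sum_apply]
  set n : ℝ := (P.card : ℝ)
  set l : ℝ := lam P (k + 1) ^ t
  set E : ℝ := Real.exp (-(t / n * (1 - 1 / (1 + (Pᶜ.card : ℝ)))))
  have hl0 : 0 ≤ l := pow_nonneg (lam_nonneg hP hk) t
  have hl1 : l ≤ E ^ (k + 1) := by
    calc l ≤ (Real.exp (-(1 / n * (1 - 1 / (1 + (Pᶜ.card : ℝ))))) ^ (k + 1)) ^ t :=
          pow_le_pow_left₀ (lam_nonneg hP hk) (lam_le_exp P (k + 1)) t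
      _ = E ^ (k + 1) := by
          rw [← pow_mul, mul_comm (k + 1) t, pow_mul]
          congr 1
          rw [← Real.exp_nat_mul]
          congr 1
          ring
  have hcard : ((P.powersetCard (k + 1)).card : ℝ) ≤ n ^ (k + 1) := by
    rw [Finset.card_powersetCard]
    have : (P.card.choose (k + 1) : ℝ) ≤ (P.card : ℝ) ^ (k + 1) := by
      exact_mod_cast Nat.choose_le_pow P.card (k + 1)
    exact this
  have key : (Fintype.card (I ≃ X) : ℝ) * (∑ A ∈ P.powersetCard (k + 1), h A w) ^ 2
      ≤ Fintype.card (I ≃ X) * ((2 * Real.exp 1 * Fintype.card S * n) ^ (k + 1) * (E ^ (k + 1)) ^ 2) := by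
    calc (Fintype.card (I ≃ X) : ℝ) * (∑ A ∈ P.powersetCard (k + 1), h A w) ^ 2
        ≤ Fintype.card (I ≃ X) * ((P.powersetCard (k + 1)).card
            * ∑ A ∈ P.powersetCard (k + 1), h A w ^ 2) := by
          gcongr; exact sq_sum_le_card_mul_sum_sq
      _ = (P.powersetCard (k + 1)).card
            * ∑ A ∈ P.powersetCard (k + 1), Fintype.card (I ≃ X) * h A w ^ 2 := by
          rw [← Finset.mul_sum]; ring
      _ ≤ n ^ (k + 1) * ∑ A ∈ P.powersetCard (k + 1),
            (Real.exp 1 * Fintype.card S) ^ (k + 1) * ip (h A) (h A) := by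
          refine mul_le_mul hcard (Finset.sum_le_sum fun A hA => ?_)
            (Finset.sum_nonneg fun _ _ => by positivity) (by positivity)
          have := (h1 A hA).1.sq_le hfib hk0 hI w
          rwa [(Finset.mem_powersetCard.1 hA).2] at this
      _ = n ^ (k + 1) * ((Real.exp 1 * Fintype.card S) ^ (k + 1) * famSq P (k + 1) h) := by
          rw [← Finset.mul_sum]; rfl
      _ ≤ n ^ (k + 1) * ((Real.exp 1 * Fintype.card S) ^ (k + 1)
            * ((E ^ (k + 1)) ^ 2 * (2 ^ (k + 1) * Fintype.card (I ≃ X)))) := by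
          gcongr
          refine h3.trans ?_
          refine mul_le_mul (by gcongr) ?_ (famSq_nonneg _ _ _) (by positivity)
          exact hfam.trans (by gcongr)
      _ = _ := by simp only [mul_pow]; ring
  have key2 := le_of_mul_le_mul_left key hG
  refine abs_le_of_sq_le_sq ?_ (by positivity)
  refine key2.trans (le_of_eq ?_)
  set y : ℝ := 2 * Real.exp 1 * Fintype.card S * n with hy
  have hy0 : Real.sqrt y ^ 2 = y := Real.sq_sqrt (by positivity)
  conv_lhs => rw [← hy0]
  ring

/-- Convergence to the mean of bounded functions of the particle sites. -/
theorem pop_iter_close {e₀ : I} (he : e₀ ∉ P) (hP0 : 0 < P.card) (hP : P.card ≤ Pᶜ.card)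
    (γ : I → I) (hγ : Function.Involutive γ) (hγP : ∀ x ∈ P, γ x ∉ P)
    (hfib : ∀ v, (Finset.univ.filter fun x => site x = v).card = kap)
    (hk0 : 0 < kap) (hI : Fintype.card I = kap * Fintype.card S)
    (hF : Dep site P F) (hF1 : ∀ w, |F w| ≤ 1) (t : ℕ) {r : ℝ}
    (hr : r = Real.sqrt (2 * Real.exp 1 * Fintype.card S * P.card)
        * Real.exp (-(t / (P.card : ℝ) * (1 - 1 / (1 + (Pᶜ.card : ℝ))))))
    (hr2 : r ≤ 1 / 2) (w : I ≃ X) :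
    |(Pop P)^[t] F w - (1 / (Fintype.card (I ≃ X) : ℝ)) * ∑ w', F w'| ≤ 2 * r := by
  obtain ⟨g, hg, hsum⟩ := hF.decomp _ P F rfl
  have hG : (0 : ℝ) < Fintype.card (I ≃ X) := by
    exact_mod_cast Fintype.card_pos_iff.2 ⟨w⟩
  have hr0 : 0 ≤ r := by rw [hr]; positivity
  set Fk : ℕ → (I ≃ X) → ℝ := fun k => ∑ A ∈ P.powersetCard k, g A with hFk
  have hgk : ∀ k, ∀ A ∈ P.powersetCard k, Pure site A (g A) := fun k A hA =>
    hg A (Finset.mem_powersetCard.1 hA).1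
  have hsum2 : F = ∑ k ∈ Finset.range (P.card + 1), Fk k := by
    rw [hsum, Finset.sum_powerset]
  have horth : ∀ j k, j < k → ip (Fk k) (Fk j) = 0 := by
    intro j k hjk
    simp only [hFk, ip_sum_left]
    refine Finset.sum_eq_zero fun A hA => ?_
    rw [ip_sum_right]
    refine Finset.sum_eq_zero fun B hB => ?_
    refine (hgk k A hA).orthogonal _ B _ rfl (hgk j B hB).1 ?_
    rw [(Finset.mem_powersetCard.1 hA).2, (Finset.mem_powersetCard.1 hB).2]
    exact hjk
  have horth2 : ∀ j k, j ≠ k → ip (Fk k) (Fk j) = 0 := by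
    intro j k hjk
    rcases lt_or_gt_of_ne hjk with h | h
    · exact horth j k h
    · rw [ip_comm]; exact horth k j h
  have hnorm : ip F F = ∑ k ∈ Finset.range (P.card + 1), ip (Fk k) (Fk k) := by
    rw [hsum2, ip_sum_left]
    refine Finset.sum_congr rfl fun k hk => ?_
    rw [ip_sum_right]
    exact Finset.sum_eq_single_of_mem k hk fun j _ hj => horth2 j k hj
  have hFF : ip F F ≤ Fintype.card (I ≃ X) := by
    calc ip F F ≤ ∑ w : I ≃ X, (1 : ℝ) := by
          refine Finset.sum_le_sum fun w' _ => ?_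
          have := abs_le.1 (hF1 w')
          nlinarith
      _ = _ := by simp
  have hle : ∀ k ∈ Finset.range (P.card + 1), ip (Fk k) (Fk k) ≤ Fintype.card (I ≃ X) := by
    intro k hk
    refine le_trans ?_ hFF
    rw [hnorm]
    exact Finset.single_le_sum (f := fun k => ip (Fk k) (Fk k)) (fun _ _ => ip_self_nonneg _) hk
  -- level zero is the constant function with value the mean of `F`
  have h0 : Fk 0 = fun _ => g ∅ w := by
    funext w'
    simp only [hFk, Finset.powersetCard_zero, Finset.sum_singleton]
    exact (hg ∅ (by simp)).1 w' w (by simp)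
  have hmean0 : ∀ k, ∑ w', Fk (k + 1) w' = 0 := by
    intro k
    have : ip (Fk (k + 1)) (fun _ => 1) = 0 := by
      simp only [hFk, ip_sum_left]
      refine Finset.sum_eq_zero fun A hA => ?_
      refine (hgk (k + 1) A hA).orthogonal _ ∅ _ rfl (fun _ _ _ => rfl) ?_
      rw [(Finset.mem_powersetCard.1 hA).2]; simp
    simpa [ip] using this
  have hmean : ∑ w', F w' = Fintype.card (I ≃ X) * g ∅ w := by
    rw [hsum2]
    simp only [Finset.sum_apply]
    rw [Finset.sum_comm, Finset.sum_range_succ', Finset.sum_eq_zero fun k _ => hmean0 k, h0]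
    simp
  rw [hmean, ← mul_assoc, one_div, inv_mul_cancel₀ hG.ne', one_mul]
  rw [hsum2, pop_iter_finset_sum, Finset.sum_apply, Finset.sum_range_succ', h0,
    pop_iter_const hP0, add_sub_cancel_right]
  refine (Finset.abs_sum_le_sum_abs _ _).trans ?_
  calc ∑ k ∈ Finset.range P.card, |(Pop P)^[t] (Fk (k + 1)) w|
      ≤ ∑ k ∈ Finset.range P.card, r ^ (k + 1) := by
        refine Finset.sum_le_sum fun k hk => ?_
        rw [hr]
        exact pop_iter_level_le he hP γ hγ hγP hfib hk0 hI (by simpa using hk) (hgk _)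
          (hle (k + 1) (by simpa using hk)) t w
    _ = r * ∑ k ∈ Finset.range P.card, r ^ k := by
        rw [Finset.mul_sum]; exact Finset.sum_congr rfl fun k _ => by ring
    _ ≤ r * 2 := by
        refine mul_le_mul_of_nonneg_left ?_ hr0
        calc ∑ k ∈ Finset.range P.card, r ^ k ≤ ∑ k ∈ Finset.range P.card, (1 / 2 : ℝ) ^ k := by
              gcongr
          _ ≤ 2 := sum_geometric_two_le _
    _ = 2 * r := by ring

end Upper

section Lower

set_option linter.unusedSectionVars false
set_option linter.unusedVariables false

variable {I X S : Type} [Fintype I] [DecidableEq I] [Fintype X] [DecidableEq X] [DecidableEq S]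
variable {site : X → S} {P : Finset I} {F : (I ≃ X) → ℝ}

/-! ### A slowly decaying statistic -/

lemma pop_iter_add (P : Finset I) (F G : (I ≃ X) → ℝ) (t : ℕ) :
    (Pop P)^[t] (F + G) = (Pop P)^[t] F + (Pop P)^[t] G := by
  induction t with
  | zero => rfl
  | succ t ih => simp only [Function.iterate_succ_apply', ih, pop_add]

lemma pop_iter_smul (P : Finset I) (c : ℝ) (F : (I ≃ X) → ℝ) (t : ℕ) :
    (Pop P)^[t] (c • F) = c • (Pop P)^[t] F := by
  induction t with
  | zero => rfl
  | succ t ih => simp only [Function.iterate_succ_apply', ih, pop_smul]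

lemma pop_iter_mono (P : Finset I) {F G : (I ≃ X) → ℝ} (h : F ≤ G) (t : ℕ) :
    (Pop P)^[t] F ≤ (Pop P)^[t] G := by
  induction t with
  | zero => exact h
  | succ t ih => simp only [Function.iterate_succ_apply']; exact pop_mono P ih

/-- The weighted number of particles at the site `v`, particle `i` having weight `a i`. -/
def stat (site : X → S) (P : Finset I) (a : I → ℝ) (v : S) (w : I ≃ X) : ℝ :=
  ∑ i ∈ P, a i * (if site (w i) = v then 1 else 0)

lemma stat_swap (a : I → ℝ) (v : S) (w : I ≃ X) {i e : I} (hi : i ∈ P) (he : e ∈ Pᶜ) :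
    stat site P a v ((Equiv.swap i e).trans w) = stat site P a v w
      + a i * ((if site (w e) = v then 1 else 0) - (if site (w i) = v then 1 else 0)) := by
  unfold stat
  rw [← Finset.add_sum_erase _ _ hi, ← Finset.add_sum_erase _ _ hi]
  have : ∀ j ∈ P.erase i, Equiv.swap i e j = j := fun j hj =>
    Equiv.swap_apply_of_ne_of_ne (Finset.ne_of_mem_erase hj)
      (by rintro rfl; exact Finset.mem_compl.1 he (Finset.mem_of_mem_erase hj))
  rw [Finset.sum_congr rfl fun j hj => by rw [Equiv.trans_apply, this j hj]]
  simp only [Equiv.trans_apply, Equiv.swap_apply_left]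
  ring

variable {a : I → ℝ} {v : S}

/-- The increments of the statistic add up to a multiple of the statistic. -/
lemma sum_incr (ha0 : ∑ i ∈ P, a i = 0) (w : I ≃ X) :
    ∑ i ∈ P, ∑ e ∈ Pᶜ,
      a i * ((if site (w e) = v then (1 : ℝ) else 0) - (if site (w i) = v then 1 else 0))
      = -((Pᶜ.card : ℝ) * stat site P a v w) := by
  simp only [mul_sub, Finset.sum_sub_distrib, Finset.sum_const, nsmul_eq_mul]
  rw [← Finset.sum_mul_sum, ha0, stat, ← Finset.mul_sum]
  ring

lemma lam_one (hP0 : 0 < P.card) :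
    lam P 1 = 1 - (1 / ((P.card : ℝ) * (1 + (Pᶜ.card : ℝ)))) * (Pᶜ.card : ℝ) := by
  have h1 : (0 : ℝ) < P.card := by exact_mod_cast hP0
  unfold lam
  have : 1 + (Pᶜ.card : ℝ) ≠ 0 := by positivity
  push_cast
  field_simp
  ring

/-- With weights of total zero, `stat` is an eigenfunction with eigenvalue `lam P 1`. -/
lemma pop_stat (hP0 : 0 < P.card) (ha0 : ∑ i ∈ P, a i = 0) :
    Pop P (stat site P a v) = lam P 1 • (stat site P a v : (I ≃ X) → ℝ) := by
  funext w
  have h1 : (0 : ℝ) < P.card := by exact_mod_cast hP0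
  have h2 : 1 + (Pᶜ.card : ℝ) ≠ 0 := by positivity
  rw [pop_apply, Finset.sum_congr rfl fun i hi => by
    rw [Finset.sum_congr rfl fun e he => stat_swap a v w hi he]]
  simp only [Finset.sum_add_distrib]
  rw [sum_incr ha0, lam_one hP0]
  simp only [Finset.sum_const, nsmul_eq_mul, Pi.smul_apply, smul_eq_mul]
  field_simp
  ring

/-- The conditional variance of one increment of the statistic is at most `1`. -/
lemma pop_stat_sq (hP0 : 0 < P.card) (ha0 : ∑ i ∈ P, a i = 0) (ha1 : ∀ i, |a i| ≤ 1) (w : I ≃ X) :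
    Pop P (fun w => stat site P a v w ^ 2) w ≤ lam P 1 ^ 2 * stat site P a v w ^ 2 + 1 := by
  have h1 : (0 : ℝ) < P.card := by exact_mod_cast hP0
  have h2 : 1 + (Pᶜ.card : ℝ) ≠ 0 := by positivity
  have h2' : 0 < 1 + (Pᶜ.card : ℝ) := by positivity
  set F := stat site P a v w with hF
  set D := (1 / ((P.card : ℝ) * (1 + (Pᶜ.card : ℝ)))) with hD
  set x : I → I → ℝ := fun i e =>
    a i * ((if site (w e) = v then (1 : ℝ) else 0) - (if site (w i) = v then 1 else 0)) with hx
  have hs : ∑ i ∈ P, ∑ e ∈ Pᶜ, x i e = -((Pᶜ.card : ℝ) * F) := sum_incr ha0 w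
  have hx1 : ∀ i e, x i e ^ 2 ≤ 1 := by
    intro i e
    rw [sq_le_one_iff_abs_le_one]
    simp only [hx, abs_mul]
    refine mul_le_one₀ (ha1 i) (abs_nonneg _) ?_
    split_ifs <;> simp
  have hxs : ∑ i ∈ P, ∑ e ∈ Pᶜ, x i e ^ 2 ≤ P.card * Pᶜ.card := by
    calc _ ≤ ∑ i ∈ P, ∑ e ∈ Pᶜ, (1 : ℝ) :=
          Finset.sum_le_sum fun i _ => Finset.sum_le_sum fun e _ => hx1 i e
      _ = _ := by simp
  have e1 : Pop P (fun w => stat site P a v w ^ 2) w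
      = F ^ 2 + 2 * F * (D * ∑ i ∈ P, ∑ e ∈ Pᶜ, x i e) + D * ∑ i ∈ P, ∑ e ∈ Pᶜ, x i e ^ 2 := by
    rw [pop_apply, Finset.sum_congr rfl fun i hi => by
      rw [Finset.sum_congr rfl fun e he => by rw [stat_swap a v w hi he]]]
    have : ∀ i e, (F + x i e) ^ 2 = F ^ 2 + 2 * F * x i e + x i e ^ 2 := fun i e => by ring
    have h3 : ∑ i ∈ P, (F ^ 2 + ∑ e ∈ Pᶜ, (F + x i e) ^ 2)
        = P.card * (1 + Pᶜ.card) * F ^ 2 + 2 * F * (∑ i ∈ P, ∑ e ∈ Pᶜ, x i e)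
          + ∑ i ∈ P, ∑ e ∈ Pᶜ, x i e ^ 2 := by
      simp only [this, Finset.sum_add_distrib, Finset.sum_const, nsmul_eq_mul, Finset.mul_sum]
      ring
    change D * (∑ i ∈ P, (F ^ 2 + ∑ e ∈ Pᶜ, (F + x i e) ^ 2)) = _
    rw [h3, hD]
    field_simp
  have hD0 : 0 ≤ D := by positivity
  have h4 : D * ∑ i ∈ P, ∑ e ∈ Pᶜ, x i e ^ 2 ≤ 1 := by
    calc _ ≤ D * (P.card * Pᶜ.card) := by gcongr
      _ ≤ 1 := by
        rw [hD, one_div, inv_mul_le_one₀ (by positivity)]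
        gcongr; linarith
  rw [e1, hs, lam_one hP0, ← hD]
  nlinarith [sq_nonneg (D * (Pᶜ.card : ℝ) * F)]

lemma lam_one_gap (hP0 : 0 < P.card) (hP : P.card ≤ Pᶜ.card) :
    1 ≤ 2 * (P.card : ℝ) * (1 - lam P 1 ^ 2) := by
  have h0 : 0 ≤ lam P 1 := lam_nonneg (k := 0) hP (by omega)
  have h1 : (1 : ℝ) ≤ P.card := by exact_mod_cast hP0
  have h2 : (1 : ℝ) ≤ Pᶜ.card := by exact_mod_cast (by omega : 1 ≤ Pᶜ.card)
  have h3 : 1 / (2 * (P.card : ℝ)) ≤ 1 - lam P 1 := by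
    rw [lam_one hP0, sub_sub_cancel, one_div_mul_eq_div, div_le_div_iff₀ (by positivity) (by positivity)]
    nlinarith
  have h4 : 1 ≤ (1 - lam P 1) * (2 * P.card) := by
    rwa [div_le_iff₀ (by positivity)] at h3
  have h5 : lam P 1 ≤ 1 := by
    by_contra hc
    push Not at hc
    nlinarith
  nlinarith [mul_nonneg h0 (sub_nonneg.2 h5)]

lemma pop_iter_stat (hP0 : 0 < P.card) (ha0 : ∑ i ∈ P, a i = 0) (t : ℕ) :
    (Pop P)^[t] (stat site P a v) = lam P 1 ^ t • (stat site P a v : (I ≃ X) → ℝ) := by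
  induction t with
  | zero => simp
  | succ t ih =>
    rw [Function.iterate_succ_apply', ih, pop_smul, pop_stat hP0 ha0, smul_smul, pow_succ]

lemma pop_iter_stat_sq (hP0 : 0 < P.card) (hP : P.card ≤ Pᶜ.card) (ha0 : ∑ i ∈ P, a i = 0)
    (ha1 : ∀ i, |a i| ≤ 1) (t : ℕ) (w : I ≃ X) :
    (Pop P)^[t] (fun w => stat site P a v w ^ 2) w
      ≤ (lam P 1 ^ t * stat site P a v w) ^ 2 + 2 * P.card := by
  induction t with
  | zero => simp
  | succ t ih =>
    have h1 : Pop P (fun w => stat site P a v w ^ 2)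
        ≤ lam P 1 ^ 2 • (fun w : I ≃ X => stat site P a v w ^ 2) + fun _ => 1 := fun w => by
      simpa using pop_stat_sq hP0 ha0 ha1 w
    have h2 := pop_iter_mono P h1 t w
    rw [pop_iter_add, pop_iter_smul, pop_iter_const hP0] at h2
    simp only [Pi.add_apply, Pi.smul_apply, smul_eq_mul] at h2
    rw [Function.iterate_succ_apply]
    refine h2.trans ?_
    have := lam_one_gap hP0 hP
    calc _ ≤ lam P 1 ^ 2 * ((lam P 1 ^ t * stat site P a v w) ^ 2 + 2 * P.card) + 1 := by gcongr
      _ ≤ _ := by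
        have e : (lam P 1 ^ (t + 1) * stat site P a v w) ^ 2
            = lam P 1 ^ 2 * (lam P 1 ^ t * stat site P a v w) ^ 2 := by ring
        rw [e]
        nlinarith

lemma mean_stat_sq (hP0 : 0 < P.card) (hP : P.card ≤ Pᶜ.card) (ha0 : ∑ i ∈ P, a i = 0)
    (ha1 : ∀ i, |a i| ≤ 1) :
    ∑ w : I ≃ X, stat site P a v w ^ 2 ≤ Fintype.card (I ≃ X) * (2 * P.card) := by
  have h1 : ∑ w : I ≃ X, stat site P a v w ^ 2
      ≤ lam P 1 ^ 2 * (∑ w : I ≃ X, stat site P a v w ^ 2) + Fintype.card (I ≃ X) := by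
    calc _ = ∑ w : I ≃ X, Pop P (fun w => stat site P a v w ^ 2) w := (sum_pop hP0 _).symm
      _ ≤ ∑ w : I ≃ X, (lam P 1 ^ 2 * stat site P a v w ^ 2 + 1) :=
        Finset.sum_le_sum fun w _ => pop_stat_sq hP0 ha0 ha1 w
      _ = _ := by rw [Finset.sum_add_distrib, Finset.mul_sum]; simp
  have h2 := lam_one_gap hP0 hP
  have h3 : 0 ≤ ∑ w : I ≃ X, stat site P a v w ^ 2 := Finset.sum_nonneg fun _ _ => sq_nonneg _
  have h4 : (0 : ℝ) < P.card := by exact_mod_cast hP0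
  nlinarith

/-- By Chebyshev's inequality, the event that the statistic is at least half of its expectation at
time `t` separates the law at time `t` from the uniform law. -/
theorem pop_iter_far (hP0 : 0 < P.card) (hP : P.card ≤ Pᶜ.card) (ha0 : ∑ i ∈ P, a i = 0)
    (ha1 : ∀ i, |a i| ≤ 1) (t : ℕ) (w : I ≃ X) {M : ℝ}
    (hM : M = lam P 1 ^ t * stat site P a v w) (hM0 : 0 < M) :
    1 - 16 * P.card / M ^ 2
      ≤ (Pop P)^[t] (fun w => if M / 2 ≤ stat site P a v w then (1 : ℝ) else 0) w
        - (1 / (Fintype.card (I ≃ X) : ℝ))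
          * ∑ w' : I ≃ X, (if M / 2 ≤ stat site P a v w' then (1 : ℝ) else 0) := by
  have hG : (0 : ℝ) < Fintype.card (I ≃ X) := by
    exact_mod_cast Fintype.card_pos_iff.2 ⟨w⟩
  have hM2 : 0 < M ^ 2 := by positivity
  set F : (I ≃ X) → ℝ := stat site P a v with hF
  -- law at time `t`
  have h1 : (fun _ => 1 - 4) + (-(4 / M ^ 2)) • (fun w => F w ^ 2) + (8 / M) • F
      ≤ fun w => if M / 2 ≤ F w then (1 : ℝ) else 0 := by
    intro w'
    simp only [Pi.add_apply, Pi.smul_apply, smul_eq_mul]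
    have e : 1 - 4 + -(4 / M ^ 2) * F w' ^ 2 + 8 / M * F w' = 1 - (2 * (F w' - M) / M) ^ 2 := by
      field_simp; ring
    rw [e]
    split_ifs with h
    · nlinarith [sq_nonneg (2 * (F w' - M) / M)]
    · push Not at h
      have : 1 ≤ 2 * (M - F w') / M := by rw [le_div_iff₀ hM0]; linarith
      have e2 : (2 * (F w' - M) / M) ^ 2 = (2 * (M - F w') / M) ^ 2 := by ring
      rw [e2]
      nlinarith
  have h2 := pop_iter_mono P h1 t w
  rw [pop_iter_add, pop_iter_add, pop_iter_smul, pop_iter_smul, pop_iter_const hP0,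
    pop_iter_stat hP0 ha0] at h2
  simp only [Pi.add_apply, Pi.smul_apply, smul_eq_mul] at h2
  rw [← hF, ← hM] at h2
  have h3 := pop_iter_stat_sq (site := site) (v := v) hP0 hP ha0 ha1 t w
  rw [← hM] at h3
  have h4 : 1 - 8 * P.card / M ^ 2
      ≤ 1 - 4 + -(4 / M ^ 2) * (Pop P)^[t] (fun w => F w ^ 2) w + 8 / M * M := by
    have : (4 / M ^ 2) * (Pop P)^[t] (fun w => F w ^ 2) w ≤ (4 / M ^ 2) * (M ^ 2 + 2 * P.card) := by
      gcongr
    have e : (4 / M ^ 2) * (M ^ 2 + 2 * P.card) = 4 + 8 * P.card / M ^ 2 := by field_simp; ring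
    have e2 : 8 / M * M = 8 := by field_simp
    rw [e2]
    linarith
  -- uniform law
  have h5 : (1 / (Fintype.card (I ≃ X) : ℝ)) * ∑ w' : I ≃ X, (if M / 2 ≤ F w' then (1 : ℝ) else 0)
      ≤ 8 * P.card / M ^ 2 := by
    calc _ ≤ (1 / (Fintype.card (I ≃ X) : ℝ)) * ∑ w' : I ≃ X, (4 / M ^ 2) * F w' ^ 2 := by
          refine mul_le_mul_of_nonneg_left (Finset.sum_le_sum fun w' _ => ?_) (by positivity)
          split_ifs with h
          · have : 1 ≤ 2 * F w' / M := by rw [le_div_iff₀ hM0]; linarith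
            have e2 : (4 / M ^ 2) * F w' ^ 2 = (2 * F w' / M) ^ 2 := by ring
            rw [e2]
            nlinarith
          · positivity
      _ ≤ (1 / (Fintype.card (I ≃ X) : ℝ)) * ((4 / M ^ 2)
            * (Fintype.card (I ≃ X) * (2 * P.card))) := by
          rw [← Finset.mul_sum]
          gcongr
          exact mean_stat_sq hP0 hP ha0 ha1
      _ = _ := by field_simp; ring
  have e : 16 * (P.card : ℝ) / M ^ 2 = 8 * P.card / M ^ 2 + 8 * P.card / M ^ 2 := by ring
  rw [e]
  linarith [h4.trans h2]

end Lower

section Link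

set_option linter.unusedSectionVars false
set_option linter.unusedVariables false

variable {Q kap n q : ℕ}

/-! ### The congestion dynamics as a projection -/

/-- The positions of the particles among `n` particles and `q` holes. -/
def parts (n q : ℕ) : Finset (Fin n ⊕ Fin q) := Finset.univ.map Function.Embedding.inl

lemma compl_parts (n q : ℕ) : (parts n q)ᶜ = Finset.univ.map Function.Embedding.inr := by
  ext x
  rcases x with x | x <;> simp [parts]

lemma card_parts (n q : ℕ) : (parts n q).card = n := by simp [parts]

lemma card_compl_parts (n q : ℕ) : (parts n q)ᶜ.card = q := by simp [compl_parts]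

lemma fib_card (Q kap : ℕ) (v : Fin Q) :
    (Finset.univ.filter fun x : Fin Q × Fin kap => x.1 = v).card = kap := by
  have : (Finset.univ.filter fun x : Fin Q × Fin kap => x.1 = v)
      = Finset.univ.map ⟨fun j : Fin kap => (v, j), fun a b h => by simpa using h⟩ := by
    ext ⟨a, b⟩
    simp only [Finset.mem_filter, Finset.mem_univ, true_and, Finset.mem_map]
    constructor
    · rintro rfl; exact ⟨b, rfl⟩
    · rintro ⟨j, hj⟩; exact (congrArg Prod.fst hj).symm
  rw [this]; simp

lemma xiCount_eq_occ (w : Fin n ⊕ Fin q ≃ Fin Q × Fin kap) (v : Fin Q) :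
    xiCount (fun i => (w (Sum.inl i)).1) v = occ Prod.fst (parts n q) w v := by
  unfold xiCount occ parts
  rw [Finset.filter_map, Finset.card_map]
  rfl

lemma xiCount_add_holes (w : Fin n ⊕ Fin q ≃ Fin Q × Fin kap) (v : Fin Q) :
    xiCount (fun i => (w (Sum.inl i)).1) v
      + (Finset.univ.filter fun e : Fin q => (w (Sum.inr e)).1 = v).card = kap := by
  refine Eq.trans ?_ (occ_add_occ_compl (A := parts n q) (fib_card Q kap) w v)
  rw [xiCount_eq_occ]
  congr 1
  unfold occ
  rw [compl_parts, Finset.filter_map, Finset.card_map]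
  rfl

/-- The configuration of a placement: the resource of each particle. -/
def conf (w : Fin n ⊕ Fin q ≃ Fin Q × Fin kap) : ConfigState Q kap n :=
  ⟨fun i => (w (Sum.inl i)).1, fun v => by have := xiCount_add_holes w v; omega⟩

lemma conf_surj (hN : n + q = kap * Q) (y : ConfigState Q kap n) :
    ∃ w : Fin n ⊕ Fin q ≃ Fin Q × Fin kap, conf w = y := by
  have hemb : ∀ v, Nonempty ({i : Fin n // y.1 i = v} ↪ Fin kap) := by
    intro v
    apply Function.Embedding.nonempty_of_card_le
    rw [Fintype.card_fin, Fintype.card_subtype]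
    exact y.2 v
  let emb : ∀ v, {i : Fin n // y.1 i = v} ↪ Fin kap := fun v => (hemb v).some
  by_cases hX : Nonempty (Fin Q × Fin kap)
  · obtain ⟨x0⟩ := hX
    let f : Fin n ⊕ Fin q → Fin Q × Fin kap :=
      Sum.elim (fun i => (y.1 i, emb (y.1 i) ⟨i, rfl⟩)) (fun _ => x0)
    have hinj : Set.InjOn f (parts n q) := by
      intro a ha b hb hab
      obtain ⟨i, -, rfl⟩ := Finset.mem_map.1 (Finset.mem_coe.1 ha)
      obtain ⟨j, -, rfl⟩ := Finset.mem_map.1 (Finset.mem_coe.1 hb)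
      simp only [f, Function.Embedding.inl_apply, Sum.elim_inl, Prod.mk.injEq] at hab
      obtain ⟨h1, h2⟩ := hab
      have key : ∀ (v v' : Fin Q) (hv : v = v') (p : {i : Fin n // y.1 i = v})
          (p' : {i : Fin n // y.1 i = v'}), emb v p = emb v' p' → p.1 = p'.1 := by
        rintro v _ rfl p p' h
        rw [(emb v).injective h]
      exact congrArg Sum.inl (key _ _ h1 _ _ h2)
    obtain ⟨g, hg⟩ := Finset.exists_equiv_extend_of_card_eq (t := Finset.univ)
      (by simp [hN, mul_comm]) (Finset.subset_univ _) hinj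
    refine ⟨g.trans (Equiv.subtypeUnivEquiv fun x => Finset.mem_univ x), ?_⟩
    apply Subtype.ext
    funext i
    have := hg (Sum.inl i) (by simp [parts])
    simp only [conf, Equiv.trans_apply, Equiv.subtypeUnivEquiv_apply]
    rw [this]
    rfl
  · have h0 : Fintype.card (Fin Q × Fin kap) = 0 := by
      rw [Fintype.card_eq_zero_iff]; exact not_nonempty_iff.1 hX
    have h1 : n + q = 0 := by rw [hN, mul_comm]; simpa using h0
    have hc : Fintype.card (Fin n ⊕ Fin q) = Fintype.card (Fin Q × Fin kap) := by
      rw [h0]; simpa using h1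
    obtain rfl : n = 0 := by omega
    exact ⟨Fintype.equivOfCardEq hc, Subtype.ext (funext fun i => i.elim0)⟩

lemma sum_parts {M : Type*} [AddCommMonoid M] (f : Fin n ⊕ Fin q → M) :
    ∑ i ∈ parts n q, f i = ∑ i, f (Sum.inl i) := by
  simp [parts]

lemma sum_compl_parts {M : Type*} [AddCommMonoid M] (f : Fin n ⊕ Fin q → M) :
    ∑ i ∈ (parts n q)ᶜ, f i = ∑ i, f (Sum.inr i) := by
  simp [compl_parts]

lemma conf_swap (w : Fin n ⊕ Fin q ≃ Fin Q × Fin kap) (i : Fin n) (e : Fin q)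
    (y : ConfigState Q kap n) :
    conf ((Equiv.swap (Sum.inl i) (Sum.inr e)).trans w) = y
      ↔ (∀ j, j ≠ i → y.1 j = (conf w).1 j) ∧ (w (Sum.inr e)).1 = y.1 i := by
  rw [Subtype.ext_iff, funext_iff]
  constructor
  · intro h
    refine ⟨fun j hj => ?_, ?_⟩
    · rw [← h j]
      simp only [conf, Equiv.trans_apply]
      rw [Equiv.swap_apply_of_ne_of_ne (by simpa using hj) (by simp)]
    · rw [← h i]
      simp [conf]
  · rintro ⟨h1, h2⟩ j
    by_cases hj : j = i
    · subst hj; simpa [conf] using h2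
    · rw [h1 j hj]
      simp only [conf, Equiv.trans_apply]
      rw [Equiv.swap_apply_of_ne_of_ne (by simpa using hj) (by simp)]

/-- The transition probabilities of the congestion dynamics are those of the lifted dynamics. -/
lemma configP_conf (hN : n + q = kap * Q) (w : Fin n ⊕ Fin q ≃ Fin Q × Fin kap)
    (y : ConfigState Q kap n) :
    configP Q kap n (conf w) y
      = Pop (parts n q) (fun w' => if conf w' = y then (1 : ℝ) else 0) w := by
  rw [pop_apply, sum_parts, card_parts, card_compl_parts]
  have hden : ((1 + kap * Q - n : ℕ) : ℝ) = 1 + (q : ℝ) := by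
    rw [← hN]
    have : 1 + (n + q) - n = 1 + q := by omega
    rw [this]; push_cast; ring
  have hinner : ∀ i : Fin n, ∑ e ∈ (parts n q)ᶜ,
      (if conf ((Equiv.swap (Sum.inl i) e).trans w) = y then (1 : ℝ) else 0)
      = if (∀ j, j ≠ i → y.1 j = (conf w).1 j) then
          ((kap - xiCount (conf w).1 (y.1 i) : ℕ) : ℝ) else 0 := by
    intro i
    rw [sum_compl_parts]
    simp only [conf_swap]
    split_ifs with h
    · have h1 := xiCount_add_holes w (y.1 i)
      have h2 : kap - xiCount (conf w).1 (y.1 i)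
          = (Finset.univ.filter fun e : Fin q => (w (Sum.inr e)).1 = y.1 i).card := by
        have : xiCount (conf w).1 (y.1 i) = xiCount (fun i => (w (Sum.inl i)).1) (y.1 i) := rfl
        omega
      rw [h2, Finset.card_filter]
      push_cast
      exact Finset.sum_congr rfl fun e _ => if_congr ⟨fun hc => hc.2, fun hc => ⟨h, hc⟩⟩ rfl rfl
    · exact Finset.sum_eq_zero fun e _ => if_neg fun hc => h hc.1
  simp only [hinner]
  unfold configP
  rw [hden, one_div_mul_eq_div]
  by_cases hy : y = conf w
  · rw [if_pos hy]
    congr 1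
    refine Finset.sum_congr rfl fun i _ => ?_
    subst hy
    have := (conf w).2 ((conf w).1 i)
    rw [if_pos rfl, if_pos fun _ _ => rfl, add_comm (1 : ℝ),
      show 1 + kap - xiCount (conf w).1 ((conf w).1 i)
        = (kap - xiCount (conf w).1 ((conf w).1 i)) + 1 by omega]
    push_cast
    rfl
  · rw [if_neg hy]
    congr 1
    refine Finset.sum_congr rfl fun i _ => ?_
    rw [if_neg (Ne.symm hy), zero_add]
    refine if_congr ⟨fun h => h.2, fun h => ⟨fun hc => hy ?_, h⟩⟩ rfl rfl
    apply Subtype.ext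
    funext j
    by_cases hj : j = i
    · rw [hj]; exact hc
    · exact h j hj

lemma sum_indicator_conf (f : ConfigState Q kap n → ℝ) :
    (fun w : Fin n ⊕ Fin q ≃ Fin Q × Fin kap => f (conf w))
      = ∑ y, f y • (fun w => if conf w = y then (1 : ℝ) else 0) := by
  funext w
  simp [Finset.sum_apply]

lemma sum_configP (hN : n + q = kap * Q) (w : Fin n ⊕ Fin q ≃ Fin Q × Fin kap)
    (f : ConfigState Q kap n → ℝ) :
    ∑ y, configP Q kap n (conf w) y * f y = Pop (parts n q) (fun w' => f (conf w')) w := by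
  rw [sum_indicator_conf, pop_finset_sum, Finset.sum_apply]
  refine Finset.sum_congr rfl fun y _ => ?_
  rw [pop_smul, configP_conf hN, mul_comm]
  rfl

/-- Expectations at time `t` of the congestion dynamics are given by the lifted dynamics. -/
lemma sum_evolve (hN : n + q = kap * Q) (w : Fin n ⊕ Fin q ≃ Fin Q × Fin kap) (t : ℕ)
    (f : ConfigState Q kap n → ℝ) :
    ∑ y, evolve (configP Q kap n) (delta (conf w)) t y * f y
      = (Pop (parts n q))^[t] (fun w' => f (conf w')) w := by
  induction t generalizing f with
  | zero => simp [evolve, delta]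
  | succ t ih =>
    rw [Function.iterate_succ_apply]
    have h1 : Pop (parts n q) (fun w' => f (conf w'))
        = fun w' : Fin n ⊕ Fin q ≃ Fin Q × Fin kap => ∑ y, configP Q kap n (conf w') y * f y :=
      funext fun w' => (sum_configP hN w' f).symm
    rw [h1, ← ih (fun x => ∑ y, configP Q kap n x y * f y)]
    simp only [evolve, Finset.sum_mul, Finset.mul_sum]
    rw [Finset.sum_comm]
    exact Finset.sum_congr rfl fun x _ => Finset.sum_congr rfl fun y _ => by ring

lemma exp_neg_potF (y : ConfigState Q kap n) :
    (kap + 1 : ℝ) ^ n * Real.exp (-(potF Q kap n y))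
      = ∏ v, (kap.descFactorial (xiCount y.1 v) : ℝ) := by
  have hk : (0 : ℝ) < kap + 1 := by positivity
  have h1 : ∀ c : ℕ, c ≤ kap → (kap + 1 : ℝ) ^ c * Real.exp (-∑ s ∈ Finset.range (c + 1),
      (Real.log ((kap : ℝ) + 1) - Real.log ((kap : ℝ) + 1 - (s : ℝ))))
      = (kap.descFactorial c : ℝ) := by
    intro c
    induction c with
    | zero => intro _; simp
    | succ c ih =>
      intro hc
      have h2 := ih (by omega)
      have hpos : (0 : ℝ) < (kap : ℝ) + 1 - ((c + 1 : ℕ) : ℝ) := by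
        have : ((c + 1 : ℕ) : ℝ) ≤ kap := by exact_mod_cast hc
        linarith
      rw [Finset.sum_range_succ, neg_add, Real.exp_add, neg_sub, Real.exp_sub, Real.exp_log hk,
        Real.exp_log hpos, Nat.descFactorial_succ, Nat.cast_mul, Nat.cast_sub (by omega), ← h2]
      push_cast
      field_simp
      ring
  have hsum : ∑ v, xiCount y.1 v = n := by
    unfold xiCount
    rw [← Finset.card_eq_sum_card_fiberwise (fun a _ => Finset.mem_univ _)]
    simp
  unfold potF
  rw [← Finset.prod_congr rfl fun v _ => h1 _ (y.2 v), Finset.prod_mul_distrib,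
    Finset.prod_pow_eq_pow_sum, hsum, ← Finset.sum_neg_distrib, Real.exp_sum]

/-- The Gibbs measure is the image of the uniform law on placements. -/
lemma sum_gibbs (hN : n + q = kap * Q) (f : ConfigState Q kap n → ℝ) :
    ∑ y, gibbs Q kap n y * f y
      = (1 / (Fintype.card (Fin n ⊕ Fin q ≃ Fin Q × Fin kap) : ℝ))
        * ∑ w : Fin n ⊕ Fin q ≃ Fin Q × Fin kap, f (conf w) := by
  set G := Fin n ⊕ Fin q ≃ Fin Q × Fin kap with hGdef
  set cnt : ConfigState Q kap n → ℝ := fun y =>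
    ((Finset.univ.filter fun w : G => conf w = y).card : ℝ) with hcnt
  have hcG : Nonempty G := by
    refine ⟨Fintype.equivOfCardEq ?_⟩
    simp [hN, mul_comm]
  have hG : (0 : ℝ) < Fintype.card G := by exact_mod_cast Fintype.card_pos_iff.2 hcG
  have hd : (0 : ℝ) < ((n + q).descFactorial n : ℝ) := by
    exact_mod_cast Nat.descFactorial_pos.2 (by omega)
  have h1 : ∀ y, cnt y * ((n + q).descFactorial n : ℝ)
      = Fintype.card G * ((kap + 1 : ℝ) ^ n * Real.exp (-(potF Q kap n y))) := by
    intro y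
    obtain ⟨w, rfl⟩ := conf_surj hN y
    have h2 := card_agree (fib_card Q kap) (parts n q) w
    have h3 : (agree Prod.fst (parts n q) w)
        = (Finset.univ.filter fun w' : G => conf w' = conf w) := by
      ext w'
      rw [mem_agree, Finset.mem_filter, Subtype.ext_iff, funext_iff]
      simp [parts, conf]
    rw [h3, card_parts] at h2
    simp only [Fintype.card_sum, Fintype.card_fin] at h2
    rw [exp_neg_potF, hcnt]
    have h4 : ∀ v, xiCount (conf w).1 v = occ Prod.fst (parts n q) w v := xiCount_eq_occ w
    simp only [h4]
    exact_mod_cast h2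
  have hpush : ∀ f : ConfigState Q kap n → ℝ, ∑ w : G, f (conf w) = ∑ y, cnt y * f y := by
    intro f
    rw [← Finset.sum_fiberwise Finset.univ (fun w : G => conf w)]
    refine Finset.sum_congr rfl fun y _ => ?_
    rw [Finset.sum_congr rfl (g := fun _ => f y) fun w hw => by rw [(Finset.mem_filter.1 hw).2],
      Finset.sum_const, nsmul_eq_mul]
  have htot : ∑ y, cnt y = Fintype.card G := by
    have := hpush fun _ => 1
    simpa using this.symm
  have hK : (0 : ℝ) < (kap + 1 : ℝ) ^ n := by positivity
  set Z : ℝ := ∑ ta : ConfigState Q kap n, Real.exp (-(potF Q kap n ta)) with hZ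
  have hZ1 : ((n + q).descFactorial n : ℝ) = (kap + 1 : ℝ) ^ n * Z := by
    have : (∑ y, cnt y) * ((n + q).descFactorial n : ℝ) = Fintype.card G * ((kap + 1 : ℝ) ^ n * Z) := by
      rw [Finset.sum_mul, Finset.sum_congr rfl fun y _ => h1 y, hZ, Finset.mul_sum, Finset.mul_sum]
    rw [htot] at this
    exact mul_left_cancel₀ hG.ne' this
  have hZ0 : 0 < Z := by
    rw [hZ1] at hd
    exact (mul_pos_iff_of_pos_left hK).1 hd
  rw [hpush, Finset.mul_sum]
  refine Finset.sum_congr rfl fun y _ => ?_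
  have h5 := h1 y
  rw [hZ1] at h5
  have h6 : cnt y * Z = Fintype.card G * Real.exp (-(potF Q kap n y)) := by
    apply mul_left_cancel₀ hK.ne'
    linarith
  unfold gibbs
  rw [← hZ, ← mul_assoc]
  congr 1
  rw [one_div_mul_eq_div, div_eq_div_iff hZ0.ne' hG.ne']
  linarith

/-- Differences of probabilities in terms of the lifted dynamics. -/
lemma sum_evolve_sub_gibbs (hN : n + q = kap * Q) (w : Fin n ⊕ Fin q ≃ Fin Q × Fin kap) (t : ℕ)
    (A : Finset (ConfigState Q kap n)) :
    ∑ y ∈ A, (evolve (configP Q kap n) (delta (conf w)) t y - gibbs Q kap n y)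
      = (Pop (parts n q))^[t] (fun w' => if conf w' ∈ A then (1 : ℝ) else 0) w
        - (1 / (Fintype.card (Fin n ⊕ Fin q ≃ Fin Q × Fin kap) : ℝ))
          * ∑ w' : Fin n ⊕ Fin q ≃ Fin Q × Fin kap, (if conf w' ∈ A then (1 : ℝ) else 0) := by
  have h1 := sum_evolve hN w t (fun y => if y ∈ A then (1 : ℝ) else 0)
  have h2 := sum_gibbs hN (fun y => if y ∈ A then (1 : ℝ) else 0)
  rw [← h1, ← h2, Finset.sum_sub_distrib]
  simp

lemma tvDist_le {X : Type*} [Fintype X] {mu nu : X → ℝ} {c : ℝ} (hc : 0 ≤ c)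
    (h : ∀ A : Finset X, |∑ x ∈ A, (mu x - nu x)| ≤ c) : tvDist mu nu ≤ c :=
  Real.iSup_le h hc

lemma le_DTV {X : Type*} [Fintype X] {p : X → X → ℝ} {pi : X → ℝ} {t : ℕ} (x0 : X)
    (A : Finset X) : ∑ x ∈ A, (evolve p (delta x0) t x - pi x) ≤ DTV p pi t := by
  refine (le_abs_self _).trans ?_
  refine le_trans ?_ (le_ciSup (f := fun x0 : X => tvDist (evolve p (delta x0) t) pi)
    (Set.finite_range _).bddAbove x0)
  exact le_ciSup (f := fun A : Finset X => |∑ x ∈ A, (evolve p (delta x0) t x - pi x)|)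
    (Set.finite_range _).bddAbove A

end Link

section Cutoff

set_option linter.unusedSectionVars false
set_option linter.unusedVariables false

variable {Q kap n q : ℕ}

/-! ### Bounds on the distance to equilibrium -/

/-- The involution exchanging the `i`-th particle with the `i`-th hole. -/
def pair (hnq : n ≤ q) : Fin n ⊕ Fin q → Fin n ⊕ Fin q
  | Sum.inl i => Sum.inr (Fin.castLE hnq i)
  | Sum.inr e => if h : e.1 < n then Sum.inl ⟨e.1, h⟩ else Sum.inr e

lemma pair_involutive (hnq : n ≤ q) : Function.Involutive (pair hnq) := by
  rintro (i | e)
  · simp [pair]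
  · by_cases h : e.1 < n
    · simp [pair, h]
    · simp [pair, h]

/-- Upper bound for the distance to equilibrium of the congestion dynamics. -/
lemma DTV_le (hn : 0 < n) (hnq : n ≤ q) (hN : n + q = kap * Q) (hk : 0 < kap) (t : ℕ) {r : ℝ}
    (hr : r = Real.sqrt (2 * Real.exp 1 * Q * n)
        * Real.exp (-(t / (n : ℝ) * (1 - 1 / (1 + (q : ℝ))))))
    (hr2 : r ≤ 1 / 2) : DTV (configP Q kap n) (gibbs Q kap n) t ≤ 2 * r := by
  have hr0 : 0 ≤ r := by rw [hr]; positivity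
  refine Real.iSup_le (fun x0 => tvDist_le (by positivity) fun A => ?_) (by positivity)
  obtain ⟨w, rfl⟩ := conf_surj hN x0
  rw [sum_evolve_sub_gibbs hN]
  have hdep : Dep Prod.fst (parts n q)
      (fun w' : Fin n ⊕ Fin q ≃ Fin Q × Fin kap => if conf w' ∈ A then (1 : ℝ) else 0) := by
    intro w1 w2 h
    have : conf w1 = conf w2 := by
      apply Subtype.ext
      funext i
      exact h (Sum.inl i) (by simp [parts])
    simp only [this]
  refine pop_iter_close (e₀ := Sum.inr ⟨0, by omega⟩) (site := Prod.fst) (kap := kap)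
    (by simp [parts]) (by rwa [card_parts]) (by rwa [card_parts, card_compl_parts]) (pair hnq)
    (pair_involutive hnq) ?_ (fib_card Q kap) hk (by simp [hN]) hdep ?_ t ?_ hr2 w
  · intro x hx
    obtain ⟨i, -, rfl⟩ := Finset.mem_map.1 hx
    simp [parts, pair]
  · intro w'
    split_ifs <;> simp
  · rw [card_parts, card_compl_parts, Fintype.card_fin, hr]

lemma card_residue {s c : ℕ} (hs : Q * s ≤ n) (hc : c < Q) :
    (Finset.univ.filter fun i : Fin n => i.1 < Q * s ∧ i.1 % Q = c).card = s := by
  have hb : ∀ j : Fin s, Q * j.1 + c < Q * s := by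
    intro j
    have : Q * (j.1 + 1) ≤ Q * s := Nat.mul_le_mul_left _ j.2
    rw [Nat.mul_add] at this
    omega
  have h1 : (Finset.univ : Finset (Fin s)).card = s := by simp
  conv_rhs => rw [← h1]
  symm
  refine Finset.card_bij (fun j _ => ⟨Q * j.1 + c, (hb j).trans_le hs⟩) ?_ ?_ ?_
  · intro j _
    simp only [Finset.mem_filter, Finset.mem_univ, true_and]
    exact ⟨hb j, by rw [Nat.mul_add_mod, Nat.mod_eq_of_lt hc]⟩
  · intro j _ j' _ h
    have h2 : Q * j.1 + c = Q * j'.1 + c := by simpa using h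
    have h3 : Q * j.1 = Q * j'.1 := by omega
    exact Fin.ext (Nat.eq_of_mul_eq_mul_left (by omega) h3)
  · intro i hi
    simp only [Finset.mem_filter, Finset.mem_univ, true_and] at hi
    refine ⟨⟨i.1 / Q, Nat.div_lt_of_lt_mul hi.1⟩, Finset.mem_univ _, ?_⟩
    apply Fin.ext
    simp only
    rw [← hi.2]
    exact Nat.div_add_mod _ _

/-- Players distributed cyclically over the resources. -/
def cyclic (hQ : 0 < Q) (hn : n ≤ kap * Q) : ConfigState Q kap n :=
  ⟨fun i => ⟨i.1 % Q, Nat.mod_lt _ hQ⟩, by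
    intro v
    have h1 : (Finset.range kap).card = kap := Finset.card_range _
    conv_rhs => rw [← h1]
    refine Finset.card_le_card_of_injOn (fun i : Fin n => i.1 / Q) ?_ ?_
    · intro i _
      simp only [Finset.coe_range, Set.mem_Iio]
      rw [Nat.div_lt_iff_lt_mul hQ]
      exact i.2.trans_le hn
    · intro i hi j hj h
      have hi' : i.1 % Q = v.1 := congrArg Fin.val (Finset.mem_filter.1 (Finset.mem_coe.1 hi)).2
      have hj' : j.1 % Q = v.1 := congrArg Fin.val (Finset.mem_filter.1 (Finset.mem_coe.1 hj)).2
      apply Fin.ext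
      rw [← Nat.div_add_mod i.1 Q, ← Nat.div_add_mod j.1 Q, hi', hj']
      simp only at h
      rw [h]⟩

/-- Weights comparing the players starting at resource `0` with those starting at resource `1` in the
cyclic configuration; the last `n % Q` players are ignored, so that the weights add up to zero. -/
def wt (Q n q : ℕ) : Fin n ⊕ Fin q → ℝ
  | Sum.inl i => (if i.1 < Q * (n / Q) ∧ i.1 % Q = 0 then 1 else 0)
      - (if i.1 < Q * (n / Q) ∧ i.1 % Q = 1 then 1 else 0)
  | Sum.inr _ => 0

/-- Lower bound for the distance to equilibrium, from the cyclic initial configuration. -/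
lemma DTV_ge (hQ : 2 ≤ Q) (hn : Q ≤ n) (hnq : n ≤ q) (hN : n + q = kap * Q) (t : ℕ) {M : ℝ}
    (hM : M = lam (parts n q) 1 ^ t * (n / Q : ℕ)) (hM0 : 0 < M) :
    1 - 16 * n / M ^ 2 ≤ DTV (configP Q kap n) (gibbs Q kap n) t := by
  have hQn : Q * (n / Q) ≤ n := Nat.mul_div_le n Q
  obtain ⟨w, hw⟩ := conf_surj hN (cyclic (by omega) (by omega) : ConfigState Q kap n)
  have hw' : ∀ i, (w (Sum.inl i)).1 = ⟨i.1 % Q, Nat.mod_lt _ (by omega)⟩ := fun i =>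
    congrFun (congrArg Subtype.val hw) i
  let v : Fin Q := ⟨0, by omega⟩
  have hst : stat Prod.fst (parts n q) (wt Q n q) v w = (n / Q : ℕ) := by
    have h1 := card_residue (n := n) (Q := Q) (s := n / Q) (c := 0) hQn (by omega)
    unfold stat
    rw [sum_parts, ← h1, Finset.card_filter]
    push_cast
    refine Finset.sum_congr rfl fun i _ => ?_
    rw [hw' i]
    simp only [wt, v, Fin.mk.injEq]
    by_cases h2 : i.1 % Q = 0
    · simp [h2]
    · simp [h2]
  have ha0 : ∑ i ∈ parts n q, wt Q n q i = 0 := by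
    have h1 := card_residue (n := n) (Q := Q) (s := n / Q) (c := 0) hQn (by omega)
    have h2 := card_residue (n := n) (Q := Q) (s := n / Q) (c := 1) hQn (by omega)
    rw [sum_parts]
    simp only [wt, Finset.sum_sub_distrib, Finset.sum_boole]
    rw [h1, h2, sub_self]
  have ha1 : ∀ i, |wt Q n q i| ≤ 1 := by
    rintro (i | e)
    · simp only [wt]
      split_ifs <;> simp
    · simp [wt]
  have h1 := pop_iter_far (site := Prod.fst) (v := v) (P := parts n q)
    (by rw [card_parts]; omega) (by rwa [card_parts, card_compl_parts]) ha0 ha1 t w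
    (by rw [hst]; exact hM) hM0
  rw [card_parts] at h1
  refine h1.trans ?_
  refine le_trans (le_of_eq ?_) (le_DTV (conf w) (Finset.univ.filter fun y : ConfigState Q kap n =>
    M / 2 ≤ ∑ i : Fin n, wt Q n q (Sum.inl i) * (if y.1 i = v then 1 else 0)))
  rw [sum_evolve_sub_gibbs hN]
  have h2 : ∀ w' : Fin n ⊕ Fin q ≃ Fin Q × Fin kap,
      (conf w' ∈ Finset.univ.filter fun y : ConfigState Q kap n =>
        M / 2 ≤ ∑ i : Fin n, wt Q n q (Sum.inl i) * (if y.1 i = v then 1 else 0))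
      ↔ M / 2 ≤ stat Prod.fst (parts n q) (wt Q n q) v w' := by
    intro w'
    rw [Finset.mem_filter, stat, sum_parts]
    exact ⟨fun h => h.2, fun h => ⟨Finset.mem_univ _, h⟩⟩
  simp only [h2]

/-! ### Cutoff -/

lemma upper_real {Qr nr qr C t eps : ℝ} (hQ : 0 < Qr) (hn : 1 ≤ nr) (hnq : nr ≤ qr)
    (heps : 0 < eps) (hC : C = 1 + 4 * Real.sqrt (2 * Real.exp 1 * Qr) / eps)
    (ht : 1 / 2 * nr * Real.log nr + C * nr ≤ t) :
    2 * (Real.sqrt (2 * Real.exp 1 * Qr * nr) * Real.exp (-(t / nr * (1 - 1 / (1 + qr))))) ≤ eps := by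
  set B := Real.sqrt (2 * Real.exp 1 * Qr) with hB
  have hB0 : 0 < B := Real.sqrt_pos.2 (by positivity)
  have hn0 : 0 < nr := by linarith
  have hlog0 : 0 ≤ Real.log nr := Real.log_nonneg hn
  have hlog1 : Real.log nr ≤ nr - 1 := Real.log_le_sub_one_of_pos hn0
  have hC0 : 0 < C := by rw [hC]; positivity
  have h1 : 1 / 2 * Real.log nr + C ≤ t / nr := by
    rw [le_div_iff₀ hn0]; linarith
  have hq1 : 0 < 1 + qr := by linarith
  have hq2 : 0 ≤ 1 - 1 / (1 + qr) := by
    rw [sub_nonneg, div_le_one hq1]; linarith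
  have h2 : (1 / 2 * Real.log nr + C) * (1 / (1 + qr)) ≤ 1 / 2 + C / 2 := by
    rw [mul_one_div, div_le_iff₀ hq1]
    nlinarith
  have h3 : 1 / 2 * Real.log nr + C / 2 - 1 / 2 ≤ t / nr * (1 - 1 / (1 + qr)) := by
    have := mul_le_mul_of_nonneg_right h1 hq2
    linarith
  have hsq : Real.sqrt nr = Real.exp (1 / 2 * Real.log nr) := by
    rw [Real.sqrt_eq_rpow, Real.rpow_def_of_pos hn0]; ring_nf
  have h4 : Real.sqrt (2 * Real.exp 1 * Qr * nr) = B * Real.exp (1 / 2 * Real.log nr) := by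
    rw [Real.sqrt_mul (by positivity), hsq]
  have h5 : 2 * B / eps ≤ Real.exp (C / 2 - 1 / 2) := by
    have e : C / 2 - 1 / 2 = 2 * B / eps := by rw [hC]; ring
    rw [e]
    linarith [Real.add_one_le_exp (2 * B / eps)]
  rw [h4, mul_assoc B, ← Real.exp_add]
  calc 2 * (B * Real.exp (1 / 2 * Real.log nr + -(t / nr * (1 - 1 / (1 + qr)))))
      ≤ 2 * (B * Real.exp (-(C / 2 - 1 / 2))) := by
        gcongr; linarith
    _ ≤ eps := by
        rw [Real.exp_neg, ← div_eq_mul_inv, ← mul_div_assoc, div_le_iff₀ (Real.exp_pos _)]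
        rw [div_le_iff₀ heps] at h5
        linarith

lemma lower_real {Qr nr l s C eps : ℝ} {t : ℕ} (hQ : 0 < Qr) (hn : 2 ≤ nr)
    (heps : eps < 1) (hC : C = 64 * Qr ^ 2 / (1 - eps) + 1)
    (hl : 1 - 1 / nr ≤ l) (hs : nr / (2 * Qr) ≤ s)
    (ht : (t : ℝ) < 1 / 2 * nr * Real.log nr - C * nr) :
    0 < l ^ t * s ∧ eps < 1 - 16 * nr / (l ^ t * s) ^ 2 := by
  have hn0 : 0 < nr := by linarith
  have hlog1 : Real.log nr ≤ nr - 1 := Real.log_le_sub_one_of_pos hn0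
  have he : 0 < 1 - eps := by linarith
  have hC0 : 0 < C := by rw [hC]; positivity
  have hn1 : 0 < nr - 1 := by linarith
  have hl0 : 0 < 1 - 1 / nr := by
    rw [sub_pos, div_lt_one hn0]; linarith
  have h1 : Real.exp (-(1 / (nr - 1))) ≤ l := by
    refine le_trans ?_ hl
    have h2 := Real.add_one_le_exp (1 / (nr - 1))
    have e : 1 - 1 / nr = (1 / (nr - 1) + 1)⁻¹ := by field_simp; ring
    rw [Real.exp_neg, e]
    exact inv_anti₀ (by positivity) h2
  have h3 : (t : ℝ) * (1 / (nr - 1)) ≤ 1 / 2 * Real.log nr - C + 1 / 2 := by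
    rw [mul_one_div, div_le_iff₀ hn1]
    nlinarith
  have h4 : Real.exp (C - 1 / 2) * Real.exp (-(1 / 2 * Real.log nr)) ≤ l ^ t := by
    calc _ = Real.exp (-(1 / 2 * Real.log nr - C + 1 / 2)) := by rw [← Real.exp_add]; ring_nf
      _ ≤ Real.exp (-((t : ℝ) * (1 / (nr - 1)))) := by gcongr
      _ = Real.exp (-(1 / (nr - 1))) ^ t := by rw [← Real.exp_nat_mul]; ring_nf
      _ ≤ l ^ t := by gcongr
  set M := l ^ t * s with hM
  set E := Real.exp (C - 1 / 2) * Real.exp (-(1 / 2 * Real.log nr)) * (nr / (2 * Qr)) with hE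
  have hE0 : 0 < E := by positivity
  have hEM : E ≤ M := mul_le_mul h4 hs (by positivity) ((by positivity : (0 : ℝ) ≤ _).trans h4)
  have hM0 : 0 < M := hE0.trans_le hEM
  refine ⟨hM0, ?_⟩
  have hE2 : E ^ 2 = Real.exp (2 * C - 1) * nr / (4 * Qr ^ 2) := by
    have e1 : Real.exp (C - 1 / 2) ^ 2 = Real.exp (2 * C - 1) := by
      rw [← Real.exp_nat_mul]; push_cast; ring_nf
    have e2 : Real.exp (-(1 / 2 * Real.log nr)) ^ 2 = nr⁻¹ := by
      rw [← Real.exp_nat_mul]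
      have : ((2 : ℕ) : ℝ) * -(1 / 2 * Real.log nr) = -Real.log nr := by push_cast; ring
      rw [this, Real.exp_neg, Real.exp_log hn0]
    rw [hE, mul_pow, mul_pow, e1, e2]
    field_simp
    ring
  have h5 : 64 * Qr ^ 2 < (1 - eps) * Real.exp (2 * C - 1) := by
    have h6 := Real.add_one_le_exp (2 * C - 1)
    have h7 : 64 * Qr ^ 2 / (1 - eps) < Real.exp (2 * C - 1) := by
      have : 64 * Qr ^ 2 / (1 - eps) < C := by rw [hC]; linarith
      linarith
    rw [div_lt_iff₀ he] at h7
    linarith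
  have h8 : 16 * nr / M ^ 2 < 1 - eps := by
    calc 16 * nr / M ^ 2 ≤ 16 * nr / E ^ 2 := by gcongr
      _ = 64 * Qr ^ 2 / Real.exp (2 * C - 1) := by rw [hE2]; field_simp; ring
      _ < 1 - eps := by rwa [div_lt_iff₀ (Real.exp_pos _)]
  linarith

end Cutoff

/-- cutoff at time `(1/2) n log n` with window `O(n)` for the
congestion dynamics, for `Q ≥ 2` fixed, `rho ∈ (0,1/2]`, `N = kappa Q`, `n = ⌊rho N⌋`. -/
theorem statement0 (Q : Nat) (hQ : 2 ≤ Q) (rho : Real) (hrho0 : 0 < rho) (hrho1 : rho ≤ 1/2)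
    (eps : Real) (heps0 : 0 < eps) (heps1 : eps < 1) :
    ∃ Ceps Neps : Real, ∀ kap : Nat, 0 < kap →
      ∀ n : Nat, n = ⌊rho * ((kap * Q : Nat) : Real)⌋₊ →
      Neps ≤ (n : Real) →
      |((Tmix (configP Q kap n) (gibbs Q kap n) eps : Nat) : Real)
          - (1/2) * (n : Real) * Real.log (n : Real)| ≤ Ceps * (n : Real) := by
  have hQ0 : (0 : ℝ) < Q := by exact_mod_cast (by omega : 0 < Q)
  have he : 0 < 1 - eps := by linarith
  obtain ⟨C₁, hC₁⟩ : ∃ C : ℝ, C = 1 + 4 * Real.sqrt (2 * Real.exp 1 * Q) / eps := ⟨_, rfl⟩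
  obtain ⟨C₂, hC₂⟩ : ∃ C : ℝ, C = 64 * (Q : ℝ) ^ 2 / (1 - eps) + 1 := ⟨_, rfl⟩
  have hC₁0 : 0 < C₁ := by rw [hC₁]; positivity
  have hC₂0 : 0 < C₂ := by rw [hC₂]; positivity
  refine ⟨C₁ + 1 + C₂, Q, fun kap hk n hn hnQ => ?_⟩
  have hQn : Q ≤ n := by exact_mod_cast hnQ
  have h2n : 2 * n ≤ kap * Q := by
    have h1 : (n : ℝ) ≤ rho * ((kap * Q : ℕ) : ℝ) := by rw [hn]; exact Nat.floor_le (by positivity)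
    have h2 : rho * ((kap * Q : ℕ) : ℝ) ≤ 1 / 2 * ((kap * Q : ℕ) : ℝ) := by gcongr
    have h3 : (2 : ℝ) * n ≤ ((kap * Q : ℕ) : ℝ) := by linarith
    exact_mod_cast h3
  obtain ⟨q, hq⟩ : ∃ q, n + q = kap * Q := ⟨kap * Q - n, by omega⟩
  have hnq : n ≤ q := by omega
  have hnr : (2 : ℝ) ≤ n := by exact_mod_cast hQ.trans hQn
  have hnqr : (n : ℝ) ≤ q := by exact_mod_cast hnq
  -- after the cutoff
  have hup : ∀ t : ℕ, 1 / 2 * (n : ℝ) * Real.log n + C₁ * n ≤ t →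
      DTV (configP Q kap n) (gibbs Q kap n) t ≤ eps := by
    intro t ht
    have h1 := upper_real hQ0 (by linarith) hnqr heps0 hC₁ ht
    exact (DTV_le (by omega) hnq hq hk t rfl (by linarith)).trans h1
  -- before the cutoff
  have hlow : ∀ t : ℕ, DTV (configP Q kap n) (gibbs Q kap n) t ≤ eps →
      1 / 2 * (n : ℝ) * Real.log n - C₂ * n ≤ t := by
    intro t ht
    by_contra hc
    push Not at hc
    have hl : 1 - 1 / (n : ℝ) ≤ lam (parts n q) 1 := by
      unfold lam
      rw [card_parts, card_compl_parts]
      have : (0 : ℝ) ≤ 1 / n * (1 / (1 + (q : ℝ))) := by positivity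
      push_cast
      linarith
    have hs : (n : ℝ) / (2 * Q) ≤ ((n / Q : ℕ) : ℝ) := by
      rw [div_le_iff₀ (by positivity)]
      have h1 : n ≤ n / Q * (2 * Q) := by
        have h2 := Nat.div_add_mod n Q
        have h3 := Nat.mod_lt n (by omega : 0 < Q)
        have h4 : 1 ≤ n / Q := (Nat.one_le_div_iff (by omega)).2 hQn
        nlinarith
      exact_mod_cast h1
    obtain ⟨h1, h2⟩ := lower_real hQ0 hnr heps1 hC₂ hl hs hc
    have h3 := DTV_ge hQ hQn hnq hq t rfl h1
    linarith
  have hlogn : 0 ≤ Real.log n := Real.log_nonneg (by linarith)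
  set T := Tmix (configP Q kap n) (gibbs Q kap n) eps with hT
  have hmem : ⌈1 / 2 * (n : ℝ) * Real.log n + C₁ * n⌉₊
      ∈ {t : ℕ | DTV (configP Q kap n) (gibbs Q kap n) t ≤ eps} := hup _ (Nat.le_ceil _)
  have hT1 : T ≤ ⌈1 / 2 * (n : ℝ) * Real.log n + C₁ * n⌉₊ := Nat.sInf_le hmem
  have hT2 : DTV (configP Q kap n) (gibbs Q kap n) T ≤ eps := Nat.sInf_mem ⟨_, hmem⟩
  have h1 := hlow T hT2
  have h2 : (T : ℝ) ≤ 1 / 2 * (n : ℝ) * Real.log n + C₁ * n + 1 :=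
    (Nat.cast_le.2 hT1).trans (Nat.ceil_lt_add_one (by positivity)).le
  have h3 : 0 ≤ C₁ * n := by positivity
  have h4 : 0 ≤ C₂ * n := by positivity
  rw [abs_le]
  constructor <;> nlinarith

end CongestionPaper
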